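/- arXiv:2103.04610 — 8 statements merged into one kernel-verified Lean document; each statement's English description precedes it below -/
import Mathlib

section
/- For every i ∈ ℤ, under the measure μ on A^ℤ the random variables ω ↦ ω(i) (the i-th coordinate) and ω ↦ τω are independent. -/
open MeasureTheory

/-- The cellular automaton `τ` defined by `(τ x)(i) = x(i) + x(i+1)`. -/
def tau {A : Type*} [Add A] (x : ℤ → A) : ℤ → A := fun i => x i + x (i + 1)

/-!
The sequence `k` with `k j = (-1) ^ (j - i) • a` lies in the kernel of `τ` and has `i`-th coordinate
`a`. Translation by `k` preserves `μ` and every event in terms of `τ ω`, while it translates `ω i`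
by `a`. Hence, restricted to any such event, the law of `ω i` is a finite translation-invariant
measure on `A`; by uniqueness of Haar measure it is a multiple of the unrestricted law, which is
independence.
-/

section Independence

variable {Ω G β : Type*} [MeasurableSpace Ω] [AddGroup G] [MeasurableSpace G] [MeasurableSpace β]
  {μ : Measure Ω} {X : Ω → G} {Y : Ω → β}

theorem isAddLeftInvariant_map_restrict [MeasurableAdd G] {B : Set Ω} (hX : Measurable X)
    (hB : MeasurableSet B)
    (hT : ∀ g, ∃ T : Ω → Ω, MeasurePreserving T μ μ ∧ X ∘ T = (g + ·) ∘ X ∧ T ⁻¹' B = B) :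
    ((μ.restrict B).map X).IsAddLeftInvariant where
  map_add_left_eq_self g := by
    obtain ⟨T, hTμ, hXT, hTB⟩ := hT g
    have hT_restrict : (μ.restrict B).map T = μ.restrict B := by
      simpa only [hTB] using (hTμ.restrict_preimage hB).map_eq
    calc ((μ.restrict B).map X).map (g + ·)
        = (μ.restrict B).map (X ∘ T) := by
          rw [Measure.map_map (measurable_const_add g) hX, hXT]
      _ = (μ.restrict B).map X := by
          rw [← Measure.map_map hX hTμ.measurable, hT_restrict]

theorem indepFun_of_measurePreserving_translations [MeasurableAdd₂ G] [MeasurableNeg G]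
    [IsProbabilityMeasure μ] (hX : Measurable X) (hY : Measurable Y)
    (hT : ∀ g, ∃ T : Ω → Ω, MeasurePreserving T μ μ ∧ X ∘ T = (g + ·) ∘ X ∧ Y ∘ T = Y) :
    ProbabilityTheory.IndepFun X Y μ := by
  have law_invariant {t : Set β} (ht : MeasurableSet t) :
      ((μ.restrict (Y ⁻¹' t)).map X).IsAddLeftInvariant := by
    refine isAddLeftInvariant_map_restrict hX (hY ht) fun g => ?_
    obtain ⟨T, hTμ, hXT, hYT⟩ := hT g
    exact ⟨T, hTμ, hXT, by rw [← Set.preimage_comp, hYT]⟩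
  have : (μ.map X).IsAddLeftInvariant := by simpa using law_invariant .univ
  have : IsProbabilityMeasure (μ.map X) := Measure.isProbabilityMeasure_map hX.aemeasurable
  rw [ProbabilityTheory.indepFun_iff_measure_inter_preimage_eq_mul]
  intro s t hs ht
  have := law_invariant ht
  have law_eq : (μ.restrict (Y ⁻¹' t)).map X = μ (Y ⁻¹' t) • μ.map X := by
    simpa [Measure.map_apply hX] using
      measure_eq_sub_vadd ((μ.restrict (Y ⁻¹' t)).map X) (μ.map X) (s := Set.univ)
  calc μ (X ⁻¹' s ∩ Y ⁻¹' t)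
      = (μ.restrict (Y ⁻¹' t)).map X s := by
        rw [Measure.map_apply hX hs, Measure.restrict_apply (hX hs)]
    _ = μ (X ⁻¹' s) * μ (Y ⁻¹' t) := by
        rw [law_eq, Measure.smul_apply, Measure.map_apply hX hs, smul_eq_mul, mul_comm]

end Independence

section Cylinders

variable {ι : Type*} {α : ι → Type*}

theorem setOf_forall_mem_eq_restrict_preimage (s : Finset ι)
    (y : ∀ i, α i) :
    {ω : ∀ i, α i | ∀ i ∈ s, ω i = y i} = s.restrict ⁻¹' {s.restrict y} := by
  ext ω
  simp [funext_iff]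

variable [∀ i, MeasurableSpace (α i)] [∀ i, MeasurableSingletonClass (α i)]

theorem measurableSet_setOf_forall_mem_eq (s : Finset ι) (y : ∀ i, α i) :
    MeasurableSet {ω : ∀ i, α i | ∀ i ∈ s, ω i = y i} := by
  rw [setOf_forall_mem_eq_restrict_preimage]
  exact s.measurable_restrict (measurableSet_singleton _)

variable [∀ i, Countable (α i)]

theorem measure_ext_of_setOf_forall_mem_eq {μ ν : Measure (∀ i, α i)} [IsFiniteMeasure ν]
    (h : ∀ (s : Finset ι) (y : ∀ i, α i),
      μ {ω | ∀ i ∈ s, ω i = y i} = ν {ω | ∀ i ∈ s, ω i = y i}) :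
    μ = ν := by
  have hν : IsProjectiveLimit ν fun s => ν.map s.restrict := fun _ => rfl
  refine IsProjectiveLimit.unique (fun s => Measure.ext_of_singleton fun z => ?_) hν
  rw [Measure.map_apply s.measurable_restrict (measurableSet_singleton z),
    Measure.map_apply s.measurable_restrict (measurableSet_singleton z)]
  obtain hempty | ⟨y, rfl⟩ := (s.restrict ⁻¹' {z}).eq_empty_or_nonempty
  · rw [hempty, measure_empty, measure_empty]
  · rw [← setOf_forall_mem_eq_restrict_preimage, h]

theorem isAddLeftInvariant_of_measure_setOf_forall_mem_eq [∀ i, AddGroup (α i)]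
    {μ : Measure (∀ i, α i)} [IsFiniteMeasure μ]
    (h : ∀ (s : Finset ι) (y z : ∀ i, α i),
      μ {ω | ∀ i ∈ s, ω i = y i} = μ {ω | ∀ i ∈ s, ω i = z i}) :
    μ.IsAddLeftInvariant where
  map_add_left_eq_self g := by
    refine measure_ext_of_setOf_forall_mem_eq fun s y => ?_
    have preimage_eq : (g + ·) ⁻¹' {ω : ∀ i, α i | ∀ i ∈ s, ω i = y i} =
        {ω | ∀ i ∈ s, ω i = (-g + y) i} := by
      ext ω
      simp [eq_neg_add_iff_add_eq]
    rw [Measure.map_apply (measurable_const_add g) (measurableSet_setOf_forall_mem_eq s y),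
      preimage_eq, h]

end Cylinders

theorem measurable_tau {A : Type*} [Add A] [MeasurableSpace A] [MeasurableAdd₂ A] :
    Measurable (tau : (ℤ → A) → ℤ → A) := by
  unfold tau
  fun_prop

theorem tau_add {A : Type*} [AddCommSemigroup A] (x y : ℤ → A) :
    tau (x + y) = tau x + tau y :=
  funext fun _ => add_add_add_comm _ _ _ _

section Alternating

variable {A : Type*} [AddCommGroup A]

/-- The alternating sequence `j ↦ (-1) ^ (j - i) • a`: the element of the kernel of `τ` whose
`i`-th coordinate is `a`. -/
def alternating (i : ℤ) (a : A) : ℤ → A := fun j => (j - i).negOnePow • a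

theorem alternating_self (i : ℤ) (a : A) : alternating i a i = a := by
  simp [alternating]

theorem tau_alternating (i : ℤ) (a : A) : tau (alternating i a) = 0 := by
  funext j
  simp [tau, alternating, add_sub_right_comm, Int.negOnePow_succ]

end Alternating

theorem stmt3_general {A : Type*} [AddCommGroup A] [MeasurableSpace A] [MeasurableAdd₂ A]
    [MeasurableNeg A] (μ : Measure (ℤ → A)) [IsProbabilityMeasure μ] [μ.IsAddLeftInvariant]
    (i : ℤ) :
    ProbabilityTheory.IndepFun (fun ω : ℤ → A => ω i) tau μ := by
  refine indepFun_of_measurePreserving_translations (measurable_pi_apply i) measurable_tau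
    fun a => ⟨(alternating i a + ·), measurePreserving_add_left μ _, ?_, ?_⟩
  · funext ω
    simp only [Function.comp_apply, Pi.add_apply, alternating_self]
  · funext ω
    simp only [Function.comp_apply, tau_add, tau_alternating, zero_add]

/-- Under the product measure `μ` (i.i.d. uniform coordinates, characterized on cylinder
sets), for every `i ∈ ℤ` the coordinate `ω ↦ ω i` and the map `ω ↦ τ ω` are independent. -/
theorem stmt3 {A : Type*} [Fintype A] [AddCommGroup A] [MeasurableSpace A]
    [MeasurableSingletonClass A] (hA : 1 < Fintype.card A)
    (μ : Measure (ℤ → A)) [IsProbabilityMeasure μ]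
    (hμ : ∀ (s : Finset ℤ) (y : ℤ → A),
      μ {ω | ∀ i ∈ s, ω i = y i} = (Fintype.card A : ENNReal)⁻¹ ^ s.card)
    (i : ℤ) :
    ProbabilityTheory.IndepFun (fun ω : ℤ → A => ω i) tau μ := by
  have := isAddLeftInvariant_of_measure_setOf_forall_mem_eq fun s y z =>
    (hμ s y).trans (hμ s z).symm
  exact stmt3_general μ i
end

section
/- Let N ≥ 0 be an integer and let j_0, j_1, …, j_N be integers such that j_{ℓ+1} ∈ {j_ℓ, j_ℓ + 1} for every 0 ≤ ℓ ≤ N−1. Then for any two configurations y, y' ∈ A^ℤ, if (τ^{N−ℓ} y)(j_ℓ) = (τ^{N−ℓ} y')(j_ℓ) for every 0 ≤ ℓ ≤ N, then y(i) = y'(i) for every i with j_0 ≤ i ≤ j_0 + N. (Equivalently, the block y[j_0, j_0+N] is a function of the values (τ^{N−ℓ} y)(j_ℓ), 0 ≤ ℓ ≤ N.) -/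
/-!
If `τ y` and `τ y'` agree on `[a, b)` and `y`, `y'` agree at one point of `[a, b]`, then cancelling
in `y i + y (i + 1) = y' i + y' (i + 1)` propagates the agreement of `y` and `y'` in both directions
from that point to all of `[a, b]`. A path `j` stays in the triangle `j 0 ≤ j ℓ ≤ j 0 + ℓ`, so
for `ℓ = 0, …, N` in turn `τ^(N - ℓ) y` and `τ^(N - ℓ) y'` agree on `[j 0, j 0 + ℓ]`: agreement at
`j ℓ` is given, and agreement of their images under `τ` on `[j 0, j 0 + ℓ)` is the previous stage.
-/

open Set

theorem mem_Icc_of_forall_succ_mem_Icc {α : Type*} [AddMonoidWithOne α] [Preorder α]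
    [AddRightMono α] {u : ℕ → α} {n : ℕ} (hu : ∀ k < n, u (k + 1) ∈ Icc (u k) (u k + 1)) :
    u n ∈ Icc (u 0) (u 0 + n) := by
  induction n with
  | zero => simp
  | succ n ih =>
    obtain ⟨lower, upper⟩ := ih fun k hk => hu k (hk.trans n.lt_succ_self)
    obtain ⟨step_lower, step_upper⟩ := hu n n.lt_succ_self
    refine ⟨lower.trans step_lower, ?_⟩
    calc
      u (n + 1) ≤ u n + 1 := step_upper
      _ ≤ u 0 + n + 1 := by gcongr
      _ = u 0 + (n + 1 : ℕ) := by rw [Nat.cast_succ, add_assoc]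

section Tau

variable {A : Type*} [Add A] [IsCancelAdd A] {y y' : ℤ → A}

theorem apply_eq_iff_apply_add_one_eq_of_tau_apply_eq {i : ℤ} (h : tau y i = tau y' i) :
    y i = y' i ↔ y (i + 1) = y' (i + 1) := by
  have hsum : y i + y (i + 1) = y' i + y' (i + 1) := h
  constructor <;> intro heq <;> rw [heq] at hsum
  · exact add_left_cancel hsum
  · exact add_right_cancel hsum

theorem eqOn_Icc_of_eqOn_tau {a b m : ℤ} (hm : m ∈ Icc a b) (hy : y m = y' m)
    (h : EqOn (tau y) (tau y') (Ico a b)) : EqOn y y' (Icc a b) := by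
  have agree_right : ∀ i, m ≤ i → i ≤ b → y i = y' i := by
    intro i hmi
    induction i, hmi using Int.leInduction with
    | base => exact fun _ => hy
    | succ i hmi ih =>
      intro hib
      have hi : i ∈ Ico a b := ⟨hm.1.trans hmi, hib⟩
      rw [← apply_eq_iff_apply_add_one_eq_of_tau_apply_eq (h hi)]
      exact ih hi.2.le
  have agree_left : ∀ i, i ≤ m → a ≤ i → y i = y' i := by
    intro i him
    induction i, him using Int.leInductionDown with
    | base => exact fun _ => hy
    | pred i him ih =>
      intro hai
      have hi : i - 1 ∈ Ico a b := ⟨hai, (sub_one_lt i).trans_le (him.trans hm.2)⟩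
      rw [apply_eq_iff_apply_add_one_eq_of_tau_apply_eq (h hi), sub_add_cancel]
      exact ih (hai.trans (sub_one_lt i).le)
  intro i hi
  exact (le_total m i).elim (agree_right i · hi.2) (agree_left i · hi.1)

theorem stmt5_general {N : ℕ} {a : ℤ} {j : ℕ → ℤ} (hj : ∀ ℓ ≤ N, j ℓ ∈ Icc a (a + ℓ))
    (h : ∀ ℓ ≤ N, (tau^[N - ℓ] y) (j ℓ) = (tau^[N - ℓ] y') (j ℓ)) :
    EqOn y y' (Icc a (a + N)) := by
  induction N generalizing y y' with
  | zero => exact eqOn_Icc_of_eqOn_tau (hj 0 le_rfl) (h 0 le_rfl) (by simp)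
  | succ N ih =>
    have agree_end : y (j (N + 1)) = y' (j (N + 1)) := by simpa using h (N + 1) le_rfl
    refine eqOn_Icc_of_eqOn_tau (hj (N + 1) le_rfl) agree_end ?_
    rw [Nat.cast_succ, ← add_assoc, Ico_add_one_right_eq_Icc]
    refine ih (fun ℓ hℓ => hj ℓ (Nat.le_succ_of_le hℓ)) fun ℓ hℓ => ?_
    simpa only [Nat.succ_sub hℓ, Function.iterate_succ_apply] using h ℓ (Nat.le_succ_of_le hℓ)

end Tau

/-- If `j_0, …, j_N` is a path of integers with `j_{ℓ+1} ∈ {j_ℓ, j_ℓ + 1}`, then the block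
`y[j_0, j_0 + N]` of a configuration `y` is determined by the values `(τ^{N-ℓ} y)(j_ℓ)`,
`0 ≤ ℓ ≤ N`: if two configurations agree on these values, they agree on the whole block. -/
theorem stmt5 {A : Type*} [Fintype A] [AddCommGroup A] (hA : 1 < Fintype.card A)
    (N : ℕ) (j : ℕ → ℤ)
    (hj : ∀ ℓ < N, j (ℓ + 1) = j ℓ ∨ j (ℓ + 1) = j ℓ + 1)
    (y y' : ℤ → A)
    (h : ∀ ℓ ≤ N, (tau^[N - ℓ] y) (j ℓ) = (tau^[N - ℓ] y') (j ℓ)) :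
    ∀ i : ℤ, j 0 ≤ i → i ≤ j 0 + N → y i = y' i := by
  have step : ∀ ℓ < N, j (ℓ + 1) ∈ Icc (j ℓ) (j ℓ + 1) := by grind
  exact fun i hi hi' => stmt5_general
    (fun ℓ hℓ => mem_Icc_of_forall_succ_mem_Icc fun k hk => step k (hk.trans_le hℓ)) h ⟨hi, hi'⟩
end

section
/- The Markov kernel τ_ε on A^ℤ is ergodic in the Markov sense: for every probability measure ν on A^ℤ, the sequence of probability measures obtained by applying the kernel n times to ν (i.e. ν τ_ε^n) converges, in the topology of weak convergence of probability measures on the compact metrizable space A^ℤ, to the product measure μ as n → ∞. In particular, μ is the unique τ_ε-invariant probability measure on A^ℤ. -/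
open MeasureTheory Filter

/-- Applying the Markov kernel `τ_ε` to a probability measure `ρ`:
`ρ ↦ ∫ τ_ε(x,·) dρ(x)`, where `τ_ε(x,·)` is the law of `τ x + ξ`, `ξ ~ ν_ε`. -/
noncomputable def stepTauEps {A : Type*} [AddCommGroup A] [MeasurableSpace A]
    (νε : Measure (ℤ → A)) (ρ : Measure (ℤ → A)) : Measure (ℤ → A) :=
  ρ.bind (fun x => Measure.map (fun ξ => tau x + ξ) νε)


/-!
Weak convergence of probability measures on a compact abelian group can be tested on continuous
characters. If `T` is a continuous surjective endomorphism, one step `ρ ↦ T_* ρ ∗ P` multiplies the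
Fourier–Stieltjes coefficient of `ρ` at `χ ∘ T` by that of `P` at `χ`, and `χ ∘ T` is again
nontrivial when `χ` is. So if the nontrivial coefficients of `P` are bounded by some `r < 1`, those
of the `n`-th iterate are at most `r ^ n`, and the iterates converge to the measure all of whose
nontrivial coefficients vanish.

On `A^ℤ` a continuous character depends on finitely many coordinates, so its coefficient with
respect to an i.i.d. law is a product of coefficients of the single-site law, at least one of them
at a nontrivial character `ψ` of `A`. That factor vanishes for the uniform law. For a single-site
law not carried by a coset of a proper subgroup it has modulus `< 1`, since modulus `1` would force
`ψ` to be constant on the support; the error law charges all of `A`.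
-/

open scoped Topology BoundedContinuousFunction

section FourierStieltjes

variable {G H : Type*} [AddCommGroup G] [MeasurableSpace G] [AddCommGroup H] [MeasurableSpace H]

/-- The Fourier–Stieltjes coefficient of a measure `ρ` on an abelian group at the character `χ`,
with the convention that `χ` itself, not its conjugate, is integrated. -/
noncomputable def fourierStieltjes (ρ : Measure G) (χ : AddChar G Circle) : ℂ :=
  ∫ x, (χ x : ℂ) ∂ρ

lemma fourierStieltjes_one (ρ : Measure G) [IsProbabilityMeasure ρ] :
    fourierStieltjes ρ 1 = 1 := by
  simp [fourierStieltjes]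

lemma norm_fourierStieltjes_le_one (ρ : Measure G) [IsProbabilityMeasure ρ]
    (χ : AddChar G Circle) : ‖fourierStieltjes ρ χ‖ ≤ 1 := by
  simpa [fourierStieltjes] using
    norm_integral_le_of_norm_le_const (ae_of_all ρ fun x => (Circle.norm_coe (χ x)).le)

lemma fourierStieltjes_map {T : G →+ H} (hT : Measurable T) (ρ : Measure G)
    {χ : AddChar H Circle} (hχ : Measurable fun x => (χ x : ℂ)) :
    fourierStieltjes (ρ.map T) χ = fourierStieltjes ρ (χ.compAddMonoidHom T) :=
  integral_map hT.aemeasurable hχ.aestronglyMeasurable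

lemma fourierStieltjes_conv [MeasurableAdd₂ G] (ρ P : Measure G) [IsFiniteMeasure ρ]
    [IsFiniteMeasure P] {χ : AddChar G Circle} (hχ : Measurable fun x => (χ x : ℂ)) :
    fourierStieltjes (ρ ∗ P) χ = fourierStieltjes ρ χ * fourierStieltjes P χ := by
  have hint : Integrable (fun x => (χ x : ℂ)) (ρ ∗ P) :=
    .of_bound hχ.aestronglyMeasurable 1 (ae_of_all _ fun x => (Circle.norm_coe (χ x)).le)
  simp only [fourierStieltjes, integral_conv hint, AddChar.map_add_eq_mul, Circle.coe_mul,
    integral_const_mul, integral_mul_const]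

end FourierStieltjes

section WeakConvergence

variable {G : Type*} [AddCommGroup G] [TopologicalSpace G]

variable (G) in
/-- The continuous characters of `G`, as a multiplicative monoid of bounded continuous functions;
its linear span is the algebra of trigonometric polynomials. -/
def charSubmonoid : Submonoid (G →ᵇ ℂ) where
  carrier := {f | ∃ χ : AddChar G Circle, Continuous χ ∧ ∀ x, f x = χ x}
  one_mem' := ⟨1, continuous_const, fun _ => by simp⟩
  mul_mem' := by
    rintro f g ⟨χ, hχ, hf⟩ ⟨ψ, hψ, hg⟩
    exact ⟨χ * ψ, hχ.mul hψ, fun x => by simp [hf, hg]⟩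

lemma star_charSubmonoid : star (charSubmonoid G : Set (G →ᵇ ℂ)) = charSubmonoid G := by
  have hstar : ∀ f ∈ charSubmonoid G, star f ∈ charSubmonoid G := by
    rintro f ⟨χ, hχ, hf⟩
    refine ⟨χ⁻¹, ?_, fun x => ?_⟩
    · exact hχ.inv.congr fun x => (AddChar.inv_apply' χ x).symm
    · rw [BoundedContinuousFunction.star_apply, hf, AddChar.inv_apply', Circle.coe_inv_eq_conj]
      rfl
  ext f
  exact ⟨fun hf => star_star f ▸ hstar _ hf, hstar f⟩

lemma mem_adjoin_charSubmonoid {f : G →ᵇ ℂ} :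
    f ∈ StarAlgebra.adjoin ℂ (charSubmonoid G : Set (G →ᵇ ℂ)) ↔
      f ∈ Submodule.span ℂ (charSubmonoid G : Set (G →ᵇ ℂ)) := by
  have hspan := StarAlgebra.adjoin_eq_span (R := ℂ) (charSubmonoid G : Set (G →ᵇ ℂ))
  rw [star_charSubmonoid, Set.union_self, Submonoid.closure_eq] at hspan
  rw [← hspan]
  rfl

lemma separatesPoints_adjoin_charSubmonoid
    (hsep : ∀ x : G, x ≠ 0 → ∃ χ : AddChar G Circle, Continuous χ ∧ χ x ≠ 1) :
    ((StarAlgebra.adjoin ℂ (charSubmonoid G : Set (G →ᵇ ℂ))).map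
      (BoundedContinuousFunction.toContinuousMapStarₐ ℂ)).SeparatesPoints := by
  intro x y hxy
  obtain ⟨χ, hχ, hne⟩ := hsep (x - y) (sub_ne_zero.2 hxy)
  let f : G →ᵇ ℂ := .ofNormedAddCommGroup (fun z => (χ z : ℂ)) (by fun_prop) 1
    fun z => (Circle.norm_coe (χ z)).le
  have hf : f ∈ StarAlgebra.adjoin ℂ (charSubmonoid G : Set (G →ᵇ ℂ)) :=
    StarAlgebra.subset_adjoin ℂ _ ⟨χ, hχ, fun _ => rfl⟩
  refine ⟨f, ⟨_, ⟨f, hf, rfl⟩, rfl⟩, fun h => hne ?_⟩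
  rw [AddChar.map_sub_eq_div, div_eq_one]
  exact Circle.coe_injective h

variable [CompactSpace G] [PolishSpace G] [MeasurableSpace G] [BorelSpace G]

theorem tendsto_of_tendsto_fourierStieltjes
    (hsep : ∀ x : G, x ≠ 0 → ∃ χ : AddChar G Circle, Continuous χ ∧ χ x ≠ 1)
    {ι : Type*} {l : Filter ι} {M : ι → ProbabilityMeasure G} {μ : ProbabilityMeasure G}
    (h : ∀ χ : AddChar G Circle, Continuous χ →
      Tendsto (fun i => fourierStieltjes (M i) χ) l (𝓝 (fourierStieltjes μ χ))) :
    Tendsto M l (𝓝 μ) := by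
  refine ProbabilityMeasure.tendsto_of_tight_of_separatesPoints ℂ .of_compactSpace
    (separatesPoints_adjoin_charSubmonoid hsep) fun f hf => ?_
  rw [mem_adjoin_charSubmonoid] at hf
  induction hf using Submodule.span_induction with
  | mem f hf =>
    obtain ⟨χ, hχ, hf⟩ := hf
    simpa only [hf, fourierStieltjes] using h χ hχ
  | zero => simpa using tendsto_const_nhds
  | add f g _ _ ihf ihg =>
    simp only [BoundedContinuousFunction.add_apply]
    simp_rw [integral_add (f.integrable _) (g.integrable _)]
    exact ihf.add ihg
  | smul c f _ ih =>
    simp only [BoundedContinuousFunction.smul_apply, integral_smul]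
    exact ih.const_smul c

end WeakConvergence

section NoisyStep

variable {G : Type*} [AddCommGroup G] [MeasurableSpace G]

/-- One step of the random dynamics `x ↦ T x + ξ` on laws, where `x` has law `ρ` and the independent
noise `ξ` has law `P`. -/
noncomputable def noisyStep (T : G → G) (P ρ : Measure G) : Measure G :=
  ρ.map T ∗ P

lemma isProbabilityMeasure_iterate_noisyStep [MeasurableAdd₂ G] {T : G → G} (hT : Measurable T)
    (P ρ : Measure G) [IsProbabilityMeasure P] [IsProbabilityMeasure ρ] (n : ℕ) :
    IsProbabilityMeasure ((noisyStep T P)^[n] ρ) := by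
  induction n with
  | zero => assumption
  | succ n ih =>
    rw [Function.iterate_succ_apply', noisyStep]
    have := Measure.isProbabilityMeasure_map (μ := (noisyStep T P)^[n] ρ) hT.aemeasurable
    infer_instance

variable [TopologicalSpace G] [BorelSpace G] [MeasurableAdd₂ G] {T : G →+ G}

lemma norm_fourierStieltjes_iterate_noisyStep_le (hT : Continuous T)
    (hTsurj : Function.Surjective T) {P : Measure G} [IsProbabilityMeasure P] {r : ℝ}
    (hP : ∀ χ : AddChar G Circle, Continuous χ → χ ≠ 1 → ‖fourierStieltjes P χ‖ ≤ r)
    (ρ : Measure G) [IsProbabilityMeasure ρ] (n : ℕ) {χ : AddChar G Circle} (hχ : Continuous χ)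
    (hχ1 : χ ≠ 1) : ‖fourierStieltjes ((noisyStep T P)^[n] ρ) χ‖ ≤ r ^ n := by
  induction n generalizing χ with
  | zero => simpa using norm_fourierStieltjes_le_one ρ χ
  | succ n ih =>
    have := isProbabilityMeasure_iterate_noisyStep hT.measurable P ρ n
    have hχT1 : χ.compAddMonoidHom T ≠ 1 := fun h =>
      hχ1 (AddChar.compAddMonoidHom_injective_left T hTsurj h)
    have hmeas : Measurable fun x => (χ x : ℂ) := (by fun_prop : Continuous _).measurable
    rw [Function.iterate_succ_apply', noisyStep, fourierStieltjes_conv _ _ hmeas,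
      fourierStieltjes_map hT.measurable _ hmeas, norm_mul, pow_succ]
    gcongr
    · exact pow_nonneg ((norm_nonneg _).trans (hP χ hχ hχ1)) n
    · exact ih (hχ.comp hT) hχT1
    · exact hP χ hχ hχ1

variable [CompactSpace G] [PolishSpace G]

theorem tendsto_integral_iterate_noisyStep
    (hsep : ∀ x : G, x ≠ 0 → ∃ χ : AddChar G Circle, Continuous χ ∧ χ x ≠ 1)
    (hT : Continuous T) (hTsurj : Function.Surjective T) {P : Measure G} [IsProbabilityMeasure P]
    {r : ℝ} (hr : r < 1)
    (hP : ∀ χ : AddChar G Circle, Continuous χ → χ ≠ 1 → ‖fourierStieltjes P χ‖ ≤ r)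
    {μ : Measure G} [IsProbabilityMeasure μ]
    (hμ : ∀ χ : AddChar G Circle, Continuous χ → χ ≠ 1 → fourierStieltjes μ χ = 0)
    (ρ : Measure G) [IsProbabilityMeasure ρ] {g : G → ℝ} (hg : Continuous g) :
    Tendsto (fun n : ℕ => ∫ x, g x ∂((noisyStep T P)^[n] ρ)) atTop (𝓝 (∫ x, g x ∂μ)) := by
  have hprob := isProbabilityMeasure_iterate_noisyStep hT.measurable P ρ
  let M (n : ℕ) : ProbabilityMeasure G := ⟨(noisyStep T P)^[n] ρ, hprob n⟩
  have hM : Tendsto M atTop (𝓝 ⟨μ, inferInstance⟩) := by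
    refine tendsto_of_tendsto_fourierStieltjes hsep fun χ hχ => ?_
    rcases eq_or_ne χ 1 with rfl | hχ1
    · simp [M, fourierStieltjes_one]
    · have hr0 : 0 ≤ r := (norm_nonneg _).trans (hP χ hχ hχ1)
      rw [ProbabilityMeasure.coe_mk, hμ χ hχ hχ1]
      exact squeeze_zero_norm
        (fun n => norm_fourierStieltjes_iterate_noisyStep_le hT hTsurj hP ρ n hχ hχ1)
        (tendsto_pow_atTop_nhds_zero_of_lt_one hr0 hr)
  exact ProbabilityMeasure.tendsto_iff_forall_integral_tendsto.1 hM (.mkOfCompact ⟨g, hg⟩)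

end NoisyStep

section Aperiodic

variable {A : Type*} [AddCommGroup A]

/-- A weight function on `A` is aperiodic if its support is not contained in a coset of a proper
subgroup; this is the condition on the single-site noise under which the automaton mixes. -/
def IsAperiodic (w : A → ENNReal) : Prop :=
  ∀ (H : AddSubgroup A) (a : A), (∀ b, w b ≠ 0 → b - a ∈ H) → H = ⊤

lemma isAperiodic_of_forall_ne_zero {w : A → ENNReal} (hw : ∀ a, w a ≠ 0) : IsAperiodic w :=
  fun H a h => (AddSubgroup.eq_top_iff' H).2 fun x => by simpa using h (x + a) (hw _)

end Aperiodic

section FiniteGroup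

variable {A : Type*} [AddCommGroup A] [MeasurableSpace A]

-- Equality in the triangle inequality forces `ψ` to be constant on the support of `m`.
lemma norm_fourierStieltjes_lt_one [Countable A] {m : Measure A} [IsProbabilityMeasure m]
    (hm : IsAperiodic fun a => m {a}) {ψ : AddChar A Circle} (hψ : ψ ≠ 1) :
    ‖fourierStieltjes m ψ‖ < 1 := by
  rcases ae_eq_const_or_norm_integral_lt_of_norm_le_const
    (ae_of_all m fun x => (Circle.norm_coe (ψ x)).le) with hconst | hlt
  · obtain ⟨a, ha⟩ := hconst.exists
    have hker : ψ.toAddMonoidHom.ker = ⊤ := by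
      refine hm _ a fun b hb => ?_
      have hba : (ψ b : ℂ) = ψ a := (ae_iff_of_countable.1 hconst b hb).trans ha.symm
      rw [AddMonoidHom.mem_ker, AddChar.toAddMonoidHom_apply, AddChar.map_sub_eq_div,
        Circle.coe_injective hba, div_self', ofMul_one]
    refine absurd (AddChar.eq_one_iff.2 fun x => ?_) hψ
    exact (AddMonoidHom.mem_ker.1 (hker ▸ AddSubgroup.mem_top x) : ψ.toAddMonoidHom x = 0)
  · simpa [fourierStieltjes] using hlt

lemma exists_lt_one_forall_norm_fourierStieltjes_le [Finite A] {m : Measure A}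
    (hm : ∀ ψ : AddChar A Circle, ψ ≠ 1 → ‖fourierStieltjes m ψ‖ < 1) :
    ∃ r < 1, ∀ ψ : AddChar A Circle, ψ ≠ 1 → ‖fourierStieltjes m ψ‖ ≤ r := by
  have : Finite (AddChar A Circle) := .of_equiv _ AddChar.circleEquivComplex.symm.toEquiv
  have hgap : ∀ᶠ r in 𝓝[<] (1 : ℝ),
      ∀ ψ : AddChar A Circle, ψ ≠ 1 → ‖fourierStieltjes m ψ‖ ≤ r := by
    simp only [eventually_all]
    exact fun ψ hψ => mem_nhdsWithin_of_mem_nhds (Ici_mem_nhds (hm ψ hψ))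
  exact (eventually_mem_nhdsWithin.and hgap).exists

variable [MeasurableSingletonClass A]

lemma fourierStieltjes_eq_zero_of_forall_singleton_eq [Finite A] {m : Measure A}
    [IsFiniteMeasure m] {c : ENNReal} (hm : ∀ a, m {a} = c) {ψ : AddChar A Circle} (hψ : ψ ≠ 1) :
    fourierStieltjes m ψ = 0 := by
  have := Fintype.ofFinite A
  have hψ' : AddChar.circleEquivComplex ψ ≠ 0 :=
    (map_ne_zero_iff _ AddChar.circleEquivComplex.injective).2 hψ
  have hsum : ∑ a, (ψ a : ℂ) = 0 := AddChar.sum_eq_zero_iff_ne_zero.2 hψ'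
  simp only [fourierStieltjes, integral_fintype .of_finite, measureReal_def, hm,
    ← Finset.smul_sum, hsum, smul_zero]

end FiniteGroup

section InvariantMeasure

variable {X : Type*} [TopologicalSpace X] [MeasurableSpace X] [HasOuterApproxClosed X]
  [BorelSpace X]

lemma eq_of_tendsto_integral_iterate {Φ : Measure X → Measure X} {ν μ : Measure X}
    [IsFiniteMeasure ν] [IsFiniteMeasure μ] (hν : Φ ν = ν)
    (h : ∀ g : X → ℝ, Continuous g →
      Tendsto (fun n : ℕ => ∫ x, g x ∂(Φ^[n] ν)) atTop (𝓝 (∫ x, g x ∂μ))) : ν = μ := by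
  refine ext_of_forall_integral_eq_of_IsFiniteMeasure fun g => ?_
  have hg := h g g.continuous
  simp only [Function.iterate_fixed hν] at hg
  exact tendsto_nhds_unique tendsto_const_nhds hg

end InvariantMeasure

section ProductGroup

variable {ι A : Type*} [AddCommGroup A]

lemma finite_setOf_pow_eq_one {n : ℕ} (hn : 0 < n) : {z : Circle | z ^ n = 1}.Finite := by
  refine .of_finite_image (.subset (Polynomial.nthRootsFinset n (1 : ℂ)).finite_toSet ?_)
    Circle.coe_injective.injOn
  rintro _ ⟨z, hz, rfl⟩
  exact (Polynomial.mem_nthRootsFinset hn 1).2 (congrArg ((↑) : Circle → ℂ) hz)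

-- The values of `χ` are `|A|`-th roots of unity, so `χ` is trivial near `0`.
lemma exists_finset_forall_eq_one_of_continuous [Finite A] [TopologicalSpace A]
    {χ : AddChar (ι → A) Circle} (hχ : Continuous χ) :
    ∃ s : Finset ι, ∀ x : ι → A, (∀ i ∈ s, x i = 0) → χ x = 1 := by
  have hroot (x : ι → A) : χ x ^ Nat.card A = 1 := by
    rw [← AddChar.map_nsmul_eq_pow, show Nat.card A • x = 0 from funext fun i => by simp,
      AddChar.map_zero_eq_one]
  have hopen : IsOpen (χ ⁻¹' ({z | z ^ Nat.card A = 1} \ {1})ᶜ) :=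
    ((finite_setOf_pow_eq_one Nat.card_pos).sdiff.isClosed.isOpen_compl).preimage hχ
  obtain ⟨s, u, hu, hsu⟩ := isOpen_pi_iff.1 hopen 0 (by simp)
  refine ⟨s, fun x hx => ?_⟩
  have hmem : x ∈ (s : Set ι).pi u := fun i hi => hx i hi ▸ (hu i hi).2
  simpa [hroot x] using hsu hmem

lemma exists_continuous_addChar_apply_ne_one [Finite A] [TopologicalSpace A] [DiscreteTopology A]
    {x : ι → A} (hx : x ≠ 0) : ∃ χ : AddChar (ι → A) Circle, Continuous χ ∧ χ x ≠ 1 := by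
  obtain ⟨i, hi⟩ := Function.ne_iff.1 hx
  obtain ⟨ψ, hψ⟩ := AddChar.exists_apply_ne_zero.2 hi
  let φ : AddChar A Circle := AddChar.circleEquivComplex.symm ψ
  have hφ : Continuous φ := continuous_of_discreteTopology
  refine ⟨φ.compAddMonoidHom (Pi.evalAddMonoidHom _ i), hφ.comp (continuous_apply i),
    fun h => hψ ?_⟩
  exact congrArg ((↑) : Circle → ℂ) h

lemma addChar_apply_eq_prod_single [DecidableEq ι] {χ : AddChar (ι → A) Circle} {s : Finset ι}
    (hs : ∀ x : ι → A, (∀ i ∈ s, x i = 0) → χ x = 1) (x : ι → A) :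
    χ x = ∏ i ∈ s, χ (Pi.single i (x i)) := by
  have hrest : χ (x - ∑ i ∈ s, Pi.single i (x i)) = 1 := by
    refine hs _ fun i hi => ?_
    simp [Finset.sum_apply, Finset.sum_pi_single, hi]
  rw [AddChar.map_sub_eq_div, div_eq_one] at hrest
  exact hrest.trans (congrArg Additive.toMul (map_sum χ.toAddMonoidHom _ s))

variable [MeasurableSpace A] [Countable A] [MeasurableSingletonClass A]

lemma fourierStieltjes_infinitePi [DecidableEq ι] (m : ι → Measure A)
    [∀ i, IsProbabilityMeasure (m i)] {χ : AddChar (ι → A) Circle} {s : Finset ι}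
    (hs : ∀ x : ι → A, (∀ i ∈ s, x i = 0) → χ x = 1) :
    fourierStieltjes (Measure.infinitePi m) χ =
      ∏ i ∈ s, fourierStieltjes (m i)
        (χ.compAddMonoidHom (AddMonoidHom.single (fun _ => A) i)) := by
  let f (i : ι) (a : A) : ℂ := χ (Pi.single i a)
  have hprod (x : ι → A) : (χ x : ℂ) = ∏ i : s, f i (s.restrict x i) := by
    rw [addChar_apply_eq_prod_single hs, ← Finset.prod_coe_sort]
    exact map_prod Circle.coeHom _ _
  calc ∫ x, (χ x : ℂ) ∂Measure.infinitePi m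
    _ = ∫ x, ∏ i : s, f i (s.restrict x i) ∂Measure.infinitePi m :=
      integral_congr_ae (ae_of_all _ hprod)
    _ = ∫ y : s → A, ∏ i : s, f i (y i) ∂Measure.pi fun i : s => m i :=
      integral_restrict_infinitePi m (f := fun y : s → A => ∏ i : s, f i (y i))
        (measurable_of_countable _).aestronglyMeasurable
    _ = ∏ i : s, ∫ a, f i a ∂m i := integral_fintype_prod_eq_prod fun (i : s) => f i
    _ = ∏ i ∈ s, ∫ a, f i a ∂m i := Finset.prod_coe_sort s fun i => ∫ a, f i a ∂m i

lemma norm_fourierStieltjes_infinitePi_le [Finite A] [TopologicalSpace A] {m : ι → Measure A}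
    [∀ i, IsProbabilityMeasure (m i)] {r : ℝ}
    (hm : ∀ i, ∀ ψ : AddChar A Circle, ψ ≠ 1 → ‖fourierStieltjes (m i) ψ‖ ≤ r)
    {χ : AddChar (ι → A) Circle} (hχ : Continuous χ) (hχ1 : χ ≠ 1) :
    ‖fourierStieltjes (Measure.infinitePi m) χ‖ ≤ r := by
  classical
  obtain ⟨s, hs⟩ := exists_finset_forall_eq_one_of_continuous hχ
  let χs (i : ι) := χ.compAddMonoidHom (AddMonoidHom.single (fun _ => A) i)
  obtain ⟨i, hi, hi1⟩ : ∃ i ∈ s, χs i ≠ 1 := by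
    by_contra! htriv
    refine hχ1 (AddChar.eq_one_iff.2 fun x => ?_)
    rw [addChar_apply_eq_prod_single hs]
    exact Finset.prod_eq_one fun i hi => AddChar.eq_one_iff.1 (htriv i hi) (x i)
  rw [fourierStieltjes_infinitePi m hs, norm_prod, ← Finset.mul_prod_erase s _ hi]
  calc ‖fourierStieltjes (m i) (χs i)‖ * ∏ j ∈ s.erase i, ‖fourierStieltjes (m j) (χs j)‖
    _ ≤ ‖fourierStieltjes (m i) (χs i)‖ * 1 := by
      gcongr
      exact Finset.prod_le_one (fun _ _ => norm_nonneg _)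
        fun j _ => norm_fourierStieltjes_le_one (m j) (χs j)
    _ ≤ r := by simpa using hm i (χs i) hi1

end ProductGroup

section Cylinders

variable {ι A : Type*} [Countable A] [MeasurableSpace A] [MeasurableSingletonClass A]

lemma eq_infinitePi_of_forall_cylinder {m : ι → Measure A} [∀ i, IsProbabilityMeasure (m i)]
    {P : Measure (ι → A)}
    (hP : ∀ (s : Finset ι) (y : ι → A), P {x | ∀ i ∈ s, x i = y i} = ∏ i ∈ s, m i {y i}) :
    P = Measure.infinitePi m := by
  classical
  refine (Measure.isProjectiveLimit_infinitePi m).unique (fun s => ?_) |>.symm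
  have hA (i : ι) : Nonempty A := (m i).nonempty_of_neZero
  refine Measure.ext_of_singleton fun y => ?_
  obtain ⟨z, rfl⟩ : ∃ z : ι → A, s.restrict z = y :=
    ⟨Function.updateFinset (fun i => (hA i).some) s y,
      Function.restrict_updateFinset (π := fun _ => A) _ y⟩
  rw [Measure.map_apply (Finset.measurable_restrict s) (measurableSet_singleton _),
    Measure.pi_singleton]
  convert hP s z using 1
  · congr 1
    ext x
    simp [funext_iff]
  · exact Finset.prod_coe_sort s fun i => m i {z i}

lemma exists_eq_infinitePi_of_forall_cylinder [Nonempty ι] {P : Measure (ι → A)}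
    [IsProbabilityMeasure P] {w : A → ENNReal}
    (hP : ∀ (s : Finset ι) (y : ι → A), P {x | ∀ i ∈ s, x i = y i} = ∏ i ∈ s, w (y i)) :
    ∃ m : Measure A, ∃ _ : IsProbabilityMeasure m,
      (∀ a, m {a} = w a) ∧ P = Measure.infinitePi fun _ => m := by
  let i₀ := Classical.arbitrary ι
  have hprob : IsProbabilityMeasure (P.map fun x => x i₀) :=
    Measure.isProbabilityMeasure_map (measurable_pi_apply i₀).aemeasurable
  have hw (a : A) : P.map (fun x => x i₀) {a} = w a := by
    rw [Measure.map_apply (measurable_pi_apply i₀) (measurableSet_singleton a)]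
    simpa using! hP {i₀} fun _ => a
  exact ⟨_, hprob, hw, eq_infinitePi_of_forall_cylinder fun s y => by simpa only [hw] using hP s y⟩

end Cylinders

section Tau

variable {A : Type*} [AddCommGroup A]

/-- The automaton `tau` as an endomorphism of the group `ℤ → A`. -/
def tauHom : (ℤ → A) →+ (ℤ → A) where
  toFun := tau
  map_zero' := by ext; simp [tau]
  map_add' x y := by ext; simp only [tau, Pi.add_apply]; abel

lemma continuous_tau [TopologicalSpace A] [ContinuousAdd A] :
    Continuous (tau : (ℤ → A) → ℤ → A) := by
  unfold tau
  fun_prop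

-- A preimage `x` of `y` is found by fixing `x 0 = 0` and solving `x i + x (i + 1) = y i` for
-- `x (i + 1)` on the right of the origin and for `x i` on its left.
lemma tau_surjective : Function.Surjective (tau : (ℤ → A) → ℤ → A) := by
  intro y
  let right : ℕ → A := Nat.rec 0 fun n a => y n - a
  let left : ℕ → A := Nat.rec (y (-1)) fun n a => y (Int.negSucc (n + 1)) - a
  refine ⟨fun i => Int.casesOn i right left, funext fun i => ?_⟩
  rcases i with n | _ | n
  · exact add_sub_cancel (right n) (y n)
  · exact add_zero (y (-1))
  · exact sub_add_cancel (y (Int.negSucc (n + 1))) (left n)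

lemma stepTauEps_eq_noisyStep [Countable A] [MeasurableSpace A] [MeasurableSingletonClass A]
    (P : Measure (ℤ → A)) [SFinite P] : stepTauEps P = noisyStep tau P := by
  have htau : Measurable (tau : (ℤ → A) → ℤ → A) := by
    unfold tau
    fun_prop
  have hstep (x : ℤ → A) :
      P.map (fun ξ => tau x + ξ) = (P.map (Prod.mk x)).map fun p => tau p.1 + p.2 := by
    rw [Measure.map_map (by fun_prop) measurable_prodMk_left]
    rfl
  have hmeas : Measurable fun x : ℤ → A => P.map fun ξ => tau x + ξ := by
    simp only [hstep]
    exact (Measure.measurable_map _ (by fun_prop)).comp Measurable.map_prodMk_left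
  refine funext fun ρ => Measure.ext_of_lintegral _ fun f hf => ?_
  rw [stepTauEps, Measure.lintegral_bind hmeas.aemeasurable hf.aemeasurable, noisyStep,
    Measure.lintegral_conv hf, lintegral_map (by fun_prop) htau]
  exact lintegral_congr fun x => lintegral_map hf (measurable_const_add _)

end Tau

section ErrorLaw

open scoped Classical in
/-- The single-site error law of the paper: `0` has mass `1 - ε` and the remaining mass is spread
evenly over the other elements of `A`. -/
noncomputable def errorWeight (A : Type*) [Fintype A] [Zero A] (ε : ℝ) (a : A) : ENNReal :=
  if a = 0 then ENNReal.ofReal (1 - ε) else ENNReal.ofReal (ε / ((Fintype.card A : ℝ) - 1))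

lemma isAperiodic_errorWeight {A : Type*} [Fintype A] [AddCommGroup A] (hA : 1 < Fintype.card A)
    {ε : ℝ} (hε0 : 0 < ε) (hε1 : ε < 1) : IsAperiodic (errorWeight A ε) := by
  have hcard : (1 : ℝ) < Fintype.card A := by exact_mod_cast hA
  refine isAperiodic_of_forall_ne_zero fun a => ?_
  rw [errorWeight]
  split_ifs
  · exact (ENNReal.ofReal_pos.2 (sub_pos.2 hε1)).ne'
  · exact (ENNReal.ofReal_pos.2 (div_pos hε0 (sub_pos.2 hcard))).ne'

end ErrorLaw

theorem stmt9_general {A : Type*} [Fintype A] [AddCommGroup A] [MeasurableSpace A]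
    [MeasurableSingletonClass A] [TopologicalSpace A] [DiscreteTopology A]
    (μ : Measure (ℤ → A)) [IsProbabilityMeasure μ]
    (hμ : ∀ (s : Finset ℤ) (y : ℤ → A),
      μ {ω | ∀ i ∈ s, ω i = y i} = (Fintype.card A : ENNReal)⁻¹ ^ s.card)
    (P : Measure (ℤ → A)) [IsProbabilityMeasure P] (w : A → ENNReal)
    (hP : ∀ (s : Finset ℤ) (y : ℤ → A), P {ξ | ∀ i ∈ s, ξ i = y i} = ∏ i ∈ s, w (y i))
    (hw : IsAperiodic w) :
    (∀ ν : Measure (ℤ → A), IsProbabilityMeasure ν →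
      ∀ g : (ℤ → A) → ℝ, Continuous g →
        Tendsto (fun n : ℕ => ∫ x, g x ∂((stepTauEps P)^[n] ν)) atTop (𝓝 (∫ x, g x ∂μ)))
    ∧ ∀ ν : Measure (ℤ → A), IsProbabilityMeasure ν → stepTauEps P ν = ν → ν = μ := by
  obtain ⟨u, _, hu, rfl⟩ := exists_eq_infinitePi_of_forall_cylinder (P := μ)
    (w := fun _ => (Fintype.card A : ENNReal)⁻¹) (by simpa only [Finset.prod_const] using hμ)
  obtain ⟨m, _, hm, rfl⟩ := exists_eq_infinitePi_of_forall_cylinder hP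
  obtain rfl : (fun a => m {a}) = w := funext hm
  obtain ⟨r, hr, hmr⟩ := exists_lt_one_forall_norm_fourierStieltjes_le (m := m)
    fun ψ => norm_fourierStieltjes_lt_one hw
  have : PolishSpace A := inferInstance
  have hconv (ν : Measure (ℤ → A)) (_ : IsProbabilityMeasure ν) (g : (ℤ → A) → ℝ)
      (hg : Continuous g) : Tendsto (fun n : ℕ =>
        ∫ x, g x ∂((stepTauEps (Measure.infinitePi fun _ => m))^[n] ν)) atTop
          (𝓝 (∫ x, g x ∂Measure.infinitePi fun _ => u)) := by
    rw [stepTauEps_eq_noisyStep]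
    exact tendsto_integral_iterate_noisyStep (T := tauHom)
      (fun x => exists_continuous_addChar_apply_ne_one) continuous_tau tau_surjective hr
      (fun χ => norm_fourierStieltjes_infinitePi_le fun _ => hmr)
      (fun χ hχ hχ1 => norm_le_zero_iff.1 <| norm_fourierStieltjes_infinitePi_le
        (fun _ ψ hψ => (norm_eq_zero.2 (fourierStieltjes_eq_zero_of_forall_singleton_eq hu hψ)).le)
        hχ hχ1) ν hg
  exact ⟨hconv, fun ν hν hinv => eq_of_tendsto_integral_iterate hinv (hconv ν hν)⟩

open scoped Classical in
/-- The probabilistic cellular automaton `τ_ε` is ergodic in the Markov sense: for every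
probability measure `ν` on `A^ℤ`, the iterates `ν τ_ε^n` converge weakly (i.e. integrals of
continuous functions on the compact metrizable space `A^ℤ` converge) to the uniform product
measure `μ`; in particular `μ` is the unique `τ_ε`-invariant probability measure.
Here `μ` and the error law `ν_ε` are characterized by their values on cylinder sets. -/
theorem stmt9 {A : Type*} [Fintype A] [AddCommGroup A] [MeasurableSpace A]
    [MeasurableSingletonClass A] [TopologicalSpace A] [DiscreteTopology A]
    (hA : 1 < Fintype.card A)
    (μ : Measure (ℤ → A)) [IsProbabilityMeasure μ]
    (hμ : ∀ (s : Finset ℤ) (y : ℤ → A),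
      μ {ω | ∀ i ∈ s, ω i = y i} = (Fintype.card A : ENNReal)⁻¹ ^ s.card)
    (ε : ℝ) (hε0 : 0 < ε)
    (hε1 : ε < ((Fintype.card A : ℝ) - 1) / (Fintype.card A : ℝ))
    (νε : Measure (ℤ → A)) [IsProbabilityMeasure νε]
    (hνε : ∀ (s : Finset ℤ) (y : ℤ → A),
      νε {ξ | ∀ i ∈ s, ξ i = y i}
        = ∏ i ∈ s, (if y i = 0 then ENNReal.ofReal (1 - ε)
            else ENNReal.ofReal (ε / ((Fintype.card A : ℝ) - 1)))) :
    (∀ ν : Measure (ℤ → A), IsProbabilityMeasure ν →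
      ∀ g : (ℤ → A) → ℝ, Continuous g →
        Tendsto (fun n : ℕ => ∫ x, g x ∂((stepTauEps νε)^[n] ν)) atTop
          (nhds (∫ x, g x ∂μ)))
    ∧ ∀ ν : Measure (ℤ → A), IsProbabilityMeasure ν → stepTauEps νε ν = ν → ν = μ := by
  have hε : ε < 1 := hε1.trans ((div_lt_one (by positivity)).2 (sub_one_lt _))
  exact stmt9_general μ hμ νε (errorWeight A ε) hνε (isAperiodic_errorWeight hA hε0 hε)
end

section
/- Let (X,d) be a compact metric space, Q a Markov kernel on X, and μ a probability measure on X invariant under Q. Assume the following coupling hypothesis: for every δ > 0 there exists M ∈ ℕ such that for every n ≥ M there is a Markov kernel K from X × X to X × X such that for all (x',x'') ∈ X × X, the first marginal of K((x',x''),·) equals Q^n(x',·), the second marginal equals Q^n(x'',·), and K((x',x''), {(y,z) : d(y,z) > δ}) < δ. Then for every probability measure ν on X, the sequence νQ^n converges to μ in the topology of weak convergence of probability measures; in particular μ is the unique Q-invariant probability measure. -/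
open MeasureTheory ProbabilityTheory Filter

/-- The `n`-fold composition `Q^n` of a Markov kernel with itself. -/
noncomputable def kpow {X : Type*} [MeasurableSpace X] (Q : Kernel X X) : ℕ → Kernel X X
  | 0 => Kernel.id
  | n + 1 => Q.comp (kpow Q n)

/-!
Let `f` be bounded and `L`-Lipschitz. A coupling of `Q ^ n x` and `Q ^ n y` that is `δ`-close off an
event of probability at most `δ` shows that `x ↦ ∫ f d(Q ^ n x)` oscillates by at most
`(L + 2‖f‖) δ`, so the integrals of this function against any two probability measures are equally
close. As `ν Q ^ (n + k) = (ν Q ^ k) Q ^ n` and `μ = μ Q ^ n`, comparing `ν Q ^ k` with `μ` gives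
`|∫ f d(ν Q ^ (n + k)) - ∫ f dμ| ≤ (L + 2‖f‖) δ` for all `k`: one time `n` per `δ` is enough.
Bounded Lipschitz functions determine weak convergence.
-/

open scoped Topology BoundedContinuousFunction

theorem norm_integral_le_mul_univ_add_mul {α E : Type*} {mα : MeasurableSpace α}
    [NormedAddCommGroup E] [NormedSpace ℝ E] {μ : Measure α} [IsFiniteMeasure μ] {f : α → E}
    (hf : Integrable f μ) {s : Set α} {B c : ℝ} (hc : 0 ≤ c) (hB : ∀ x, ‖f x‖ ≤ B)
    (hs : ∀ x ∉ s, ‖f x‖ ≤ c) :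
    ‖∫ x, f x ∂μ‖ ≤ c * μ.real Set.univ + B * μ.real s := by
  let t := toMeasurable μ s
  have ht : MeasurableSet t := measurableSet_toMeasurable μ s
  have ht_real : μ.real t = μ.real s := by
    rw [Measure.real, measure_toMeasurable, Measure.real]
  have h_on : ‖∫ x in t, f x ∂μ‖ ≤ B * μ.real t :=
    norm_setIntegral_le_of_norm_le_const (measure_lt_top μ t) fun x _ ↦ hB x
  have h_off : ‖∫ x in tᶜ, f x ∂μ‖ ≤ c * μ.real tᶜ :=
    norm_setIntegral_le_of_norm_le_const (measure_lt_top μ tᶜ) fun x hx ↦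
      hs x fun hxs ↦ hx (subset_toMeasurable μ s hxs)
  calc ‖∫ x, f x ∂μ‖ = ‖∫ x in t, f x ∂μ + ∫ x in tᶜ, f x ∂μ‖ := by
        rw [integral_add_compl ht hf]
    _ ≤ B * μ.real t + c * μ.real tᶜ := norm_add_le_of_le h_on h_off
    _ ≤ B * μ.real t + c * μ.real Set.univ := by
        gcongr
        exacts [measure_ne_top μ _, Set.subset_univ _]
    _ = c * μ.real Set.univ + B * μ.real s := by rw [ht_real, add_comm]

section Coupling

variable {α β E : Type*} {mα : MeasurableSpace α} {mβ : MeasurableSpace β}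
  [NormedAddCommGroup E]

/-- `γ` is a coupling of `μ` and `ν`: its first marginal is `μ` and its second marginal is `ν`. -/
structure IsCoupling (γ : Measure (α × β)) (μ : Measure α) (ν : Measure β) : Prop where
  fst_eq : γ.fst = μ
  snd_eq : γ.snd = ν

theorem isCoupling_prod (μ : Measure α) (ν : Measure β) [IsProbabilityMeasure μ]
    [IsProbabilityMeasure ν] : IsCoupling (μ.prod ν) μ ν :=
  ⟨Measure.fst_prod, Measure.snd_prod⟩

namespace IsCoupling

variable {γ : Measure (α × β)} {μ : Measure α} {ν : Measure β} {f : α → E} {g : β → E}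

theorem isProbabilityMeasure [IsProbabilityMeasure μ] (hγ : IsCoupling γ μ ν) :
    IsProbabilityMeasure γ :=
  ⟨by rw [← Measure.fst_univ, hγ.fst_eq, measure_univ]⟩

theorem measurePreserving_fst (hγ : IsCoupling γ μ ν) : MeasurePreserving Prod.fst γ μ :=
  ⟨measurable_fst, hγ.fst_eq⟩

theorem measurePreserving_snd (hγ : IsCoupling γ μ ν) : MeasurePreserving Prod.snd γ ν :=
  ⟨measurable_snd, hγ.snd_eq⟩

theorem integrable_sub (hγ : IsCoupling γ μ ν) (hf : Integrable f μ) (hg : Integrable g ν) :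
    Integrable (fun q ↦ f q.1 - g q.2) γ :=
  (hγ.measurePreserving_fst.integrable_comp_of_integrable hf).sub
    (hγ.measurePreserving_snd.integrable_comp_of_integrable hg)

variable [NormedSpace ℝ E]

theorem integral_sub (hγ : IsCoupling γ μ ν) (hf : Integrable f μ) (hg : Integrable g ν) :
    ∫ q, (f q.1 - g q.2) ∂γ = ∫ x, f x ∂μ - ∫ y, g y ∂ν := by
  have h_fst : ∫ x, f x ∂μ = ∫ q, f q.1 ∂γ := by
    rw [← hγ.measurePreserving_fst.map_eq] at hf ⊢
    exact integral_map measurable_fst.aemeasurable hf.aestronglyMeasurable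
  have h_snd : ∫ y, g y ∂ν = ∫ q, g q.2 ∂γ := by
    rw [← hγ.measurePreserving_snd.map_eq] at hg ⊢
    exact integral_map measurable_snd.aemeasurable hg.aestronglyMeasurable
  rw [h_fst, h_snd]
  exact MeasureTheory.integral_sub (hγ.measurePreserving_fst.integrable_comp_of_integrable hf)
    (hγ.measurePreserving_snd.integrable_comp_of_integrable hg)

theorem dist_integral_le_add_mul [IsProbabilityMeasure μ] (hγ : IsCoupling γ μ ν)
    (hf : Integrable f μ) (hg : Integrable g ν) {s : Set (α × β)} {B c : ℝ} (hc : 0 ≤ c)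
    (hB : ∀ x y, dist (f x) (g y) ≤ B) (hs : ∀ q ∉ s, dist (f q.1) (g q.2) ≤ c) :
    dist (∫ x, f x ∂μ) (∫ y, g y ∂ν) ≤ c + B * γ.real s := by
  have := hγ.isProbabilityMeasure
  simp only [dist_eq_norm] at hB hs ⊢
  simpa only [hγ.integral_sub hf hg, probReal_univ, mul_one] using
    norm_integral_le_mul_univ_add_mul (hγ.integrable_sub hf hg) hc (fun q ↦ hB q.1 q.2) hs

theorem dist_integral_le_of_lipschitzWith {X : Type*} [PseudoMetricSpace X] [MeasurableSpace X]
    [OpensMeasurableSpace X] {γ : Measure (X × X)} {μ ν : Measure X} [IsProbabilityMeasure μ]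
    [IsFiniteMeasure ν] (hγ : IsCoupling γ μ ν) {f : X →ᵇ ℝ} {L : NNReal}
    (hf : LipschitzWith L f) {δ : ℝ} (hδ : 0 ≤ δ) :
    dist (∫ x, f x ∂μ) (∫ y, f y ∂ν) ≤
      L * δ + 2 * ‖f‖ * γ.real {q | δ < dist q.1 q.2} :=
  hγ.dist_integral_le_add_mul (f.integrable μ) (f.integrable ν) (by positivity)
    f.dist_le_two_norm fun _ hq ↦ hf.dist_le_mul_of_le (not_lt.mp hq)

end IsCoupling

theorem dist_integral_le_of_forall_dist_le [NormedSpace ℝ E] {μ : Measure α} {ν : Measure β}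
    [IsProbabilityMeasure μ] [IsProbabilityMeasure ν] {f : α → E} {g : β → E}
    (hf : Integrable f μ) (hg : Integrable g ν) {ε : ℝ} (h : ∀ x y, dist (f x) (g y) ≤ ε) :
    dist (∫ x, f x ∂μ) (∫ y, g y ∂ν) ≤ ε := by
  simpa using (isCoupling_prod μ ν).dist_integral_le_add_mul hf hg (s := Set.univ) le_rfl h
    fun q hq ↦ absurd (Set.mem_univ q) hq

end Coupling

section Kernel

variable {α β E : Type*} {mα : MeasurableSpace α} {mβ : MeasurableSpace β}
  [NormedAddCommGroup E] [NormedSpace ℝ E] {κ : Kernel α β} {μ ν : Measure α} {f : β → E}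

theorem integrable_integral_of_integrable_measure_comp (hf : Integrable f (κ ∘ₘ μ)) :
    Integrable (fun x ↦ ∫ y, f y ∂κ x) μ := by
  rw [Measure.comp_eq_comp_const_apply] at hf
  simpa only [Kernel.const_apply] using hf.integral_comp

theorem integral_measure_comp (hf : Integrable f (κ ∘ₘ μ)) :
    ∫ y, f y ∂(κ ∘ₘ μ) = ∫ x, ∫ y, f y ∂κ x ∂μ := by
  rw [Measure.comp_eq_comp_const_apply] at hf ⊢
  rw [Kernel.integral_comp hf, Kernel.const_apply]

theorem dist_integral_measure_comp_le [IsProbabilityMeasure μ] [IsProbabilityMeasure ν]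
    (hμ : Integrable f (κ ∘ₘ μ)) (hν : Integrable f (κ ∘ₘ ν)) {ε : ℝ}
    (h : ∀ x y, dist (∫ z, f z ∂κ x) (∫ z, f z ∂κ y) ≤ ε) :
    dist (∫ y, f y ∂(κ ∘ₘ μ)) (∫ y, f y ∂(κ ∘ₘ ν)) ≤ ε := by
  rw [integral_measure_comp hμ, integral_measure_comp hν]
  exact dist_integral_le_of_forall_dist_le (integrable_integral_of_integrable_measure_comp hμ)
    (integrable_integral_of_integrable_measure_comp hν) h

end Kernel

section Pow

variable {α : Type*} {mα : MeasurableSpace α}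

theorem kpow_eq_pow (Q : Kernel α α) (n : ℕ) : kpow Q n = Q ^ n := by
  induction n with
  | zero => rfl
  | succ n ih => rw [kpow, ih, pow_succ']; rfl

instance isMarkovKernel_pow (Q : Kernel α α) [IsMarkovKernel Q] (n : ℕ) :
    IsMarkovKernel (Q ^ n) := by
  induction n with
  | zero => exact inferInstanceAs (IsMarkovKernel Kernel.id)
  | succ n ih => rw [pow_succ']; exact Kernel.IsMarkovKernel.comp Q (Q ^ n)

theorem invariant_pow {Q : Kernel α α} {μ : Measure α} (h : Q.Invariant μ) (n : ℕ) :
    (Q ^ n).Invariant μ := by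
  induction n with
  | zero => exact Measure.id_comp
  | succ n ih => rw [pow_succ']; exact h.comp ih

theorem pow_add_measure_comp (Q : Kernel α α) (ν : Measure α) (m n : ℕ) :
    ⇑(Q ^ (m + n)) ∘ₘ ν = ⇑(Q ^ m) ∘ₘ (⇑(Q ^ n) ∘ₘ ν) := by
  rw [Kernel.pow_add, Measure.comp_assoc]

/-- The law `νQⁿ` at time `n` of the `Q`-chain with initial law `ν`, as a point of the space
`ProbabilityMeasure α`, whose topology is that of weak convergence. -/
noncomputable def chainLaw (Q : Kernel α α) [IsMarkovKernel Q] (ν : ProbabilityMeasure α) (n : ℕ) :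
    ProbabilityMeasure α :=
  ⟨⇑(Q ^ n) ∘ₘ (ν : Measure α), inferInstance⟩

end Pow

section Coalescence

variable {X : Type*} [PseudoMetricSpace X] [MeasurableSpace X] {Q : Kernel X X}

/-- The `Q`-chains started at any two points can be coupled so as to be `δ`-close with probability
at least `1 - δ` at some time depending only on `δ`. This weakens uniform cosiness: one time per `δ`
is asked for, and the coupling need not depend measurably on the starting points. -/
def UniformlyCoalescing (Q : Kernel X X) : Prop :=
  ∀ δ : ℝ, 0 < δ → ∃ n : ℕ, ∀ x y, ∃ γ : Measure (X × X),
    IsCoupling γ ((Q ^ n) x) ((Q ^ n) y) ∧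
      γ {q | δ < dist q.1 q.2} ≤ ENNReal.ofReal δ

namespace UniformlyCoalescing

variable [IsMarkovKernel Q]

theorem exists_forall_dist_integral_pow_le [OpensMeasurableSpace X] (hQ : UniformlyCoalescing Q)
    {f : X →ᵇ ℝ} {L : NNReal} (hf : LipschitzWith L f) {ε : ℝ} (hε : 0 < ε) :
    ∃ n : ℕ, ∀ x y, dist (∫ z, f z ∂(Q ^ n) x) (∫ z, f z ∂(Q ^ n) y) ≤ ε := by
  obtain ⟨δ, hδ, hδε⟩ := exists_pos_mul_lt hε (L + 2 * ‖f‖)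
  obtain ⟨n, hn⟩ := hQ δ hδ
  refine ⟨n, fun x y ↦ ?_⟩
  obtain ⟨γ, hγ, hγδ⟩ := hn x y
  calc dist (∫ z, f z ∂(Q ^ n) x) (∫ z, f z ∂(Q ^ n) y)
      ≤ L * δ + 2 * ‖f‖ * γ.real {q | δ < dist q.1 q.2} :=
        hγ.dist_integral_le_of_lipschitzWith hf hδ.le
    _ ≤ L * δ + 2 * ‖f‖ * δ := by
        gcongr
        exact ENNReal.toReal_le_of_le_ofReal hδ.le hγδ
    _ = (L + 2 * ‖f‖) * δ := by ring
    _ ≤ ε := hδε.le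

theorem tendsto_integral_of_lipschitzWith [OpensMeasurableSpace X] (hQ : UniformlyCoalescing Q)
    {μ : Measure X} [IsProbabilityMeasure μ] (hμ : Q.Invariant μ) (ν : Measure X)
    [IsProbabilityMeasure ν] {f : X →ᵇ ℝ} {L : NNReal} (hf : LipschitzWith L f) :
    Tendsto (fun n : ℕ ↦ ∫ x, f x ∂(⇑(Q ^ n) ∘ₘ ν)) atTop (𝓝 (∫ x, f x ∂μ)) := by
  refine Metric.tendsto_atTop'.mpr fun ε hε ↦ ?_
  obtain ⟨n, hn⟩ := hQ.exists_forall_dist_integral_pow_le hf (half_pos hε)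
  refine ⟨n, fun m hm ↦ ?_⟩
  obtain ⟨k, rfl⟩ := Nat.exists_eq_add_of_le hm.le
  have h_close := dist_integral_measure_comp_le (κ := Q ^ n) (μ := ⇑(Q ^ k) ∘ₘ ν) (ν := μ)
    (f.integrable _) (f.integrable _) hn
  rw [← pow_add_measure_comp, (invariant_pow hμ n).def] at h_close
  exact h_close.trans_lt (half_lt_self hε)

theorem tendsto_chainLaw [OpensMeasurableSpace X] (hQ : UniformlyCoalescing Q)
    {μ : ProbabilityMeasure X} (hμ : Q.Invariant μ) (ν : ProbabilityMeasure X) :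
    Tendsto (chainLaw Q ν) atTop (𝓝 μ) := by
  refine tendsto_iff_forall_lipschitz_integral_tendsto.mpr fun f hf_bdd ⟨L, hf⟩ ↦ ?_
  exact hQ.tendsto_integral_of_lipschitzWith hμ ν (f := ⟨⟨f, hf.continuous⟩, hf_bdd⟩) hf

theorem eq_of_invariant [BorelSpace X] (hQ : UniformlyCoalescing Q) {μ ν : ProbabilityMeasure X}
    (hμ : Q.Invariant μ) (hν : Q.Invariant ν) : ν = μ := by
  refine tendsto_nhds_unique ?_ (hQ.tendsto_chainLaw hμ ν)
  have h_const : chainLaw Q ν = fun _ ↦ ν := funext fun n ↦ Subtype.ext (invariant_pow hν n).def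
  exact h_const ▸ tendsto_const_nhds

end UniformlyCoalescing

theorem uniformlyCoalescing_of_exists_kernel
    (h : ∀ δ : ℝ, 0 < δ → ∃ M : ℕ, ∀ n : ℕ, M ≤ n →
      ∃ K : Kernel (X × X) (X × X), IsMarkovKernel K ∧
        (∀ p : X × X, (K p).map Prod.fst = kpow Q n p.1) ∧
        (∀ p : X × X, (K p).map Prod.snd = kpow Q n p.2) ∧
        (∀ p : X × X, K p {q : X × X | δ < dist q.1 q.2} < ENNReal.ofReal δ)) :
    UniformlyCoalescing Q := by
  intro δ hδ
  obtain ⟨M, hM⟩ := h δ hδ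
  obtain ⟨K, -, h_fst, h_snd, h_far⟩ := hM M le_rfl
  simp only [kpow_eq_pow] at h_fst h_snd
  exact ⟨M, fun x y ↦ ⟨K (x, y), ⟨h_fst (x, y), h_snd (x, y)⟩, (h_far (x, y)).le⟩⟩

end Coalescence

theorem stmt10_general {X : Type*} [PseudoMetricSpace X] [MeasurableSpace X] [BorelSpace X]
    {Q : Kernel X X} [IsMarkovKernel Q] {μ : ProbabilityMeasure X} (hμ : Q.Invariant μ)
    (hQ : UniformlyCoalescing Q) :
    (∀ ν : ProbabilityMeasure X, Tendsto (chainLaw Q ν) atTop (𝓝 μ)) ∧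
    ∀ ν : ProbabilityMeasure X, Q.Invariant ν → ν = μ :=
  ⟨hQ.tendsto_chainLaw hμ, fun _ hν ↦ hQ.eq_of_invariant hμ hν⟩

/-- Let `Q` be a Markov kernel on a compact metric space `X` and `μ` a `Q`-invariant
probability measure. If for every `δ > 0` there is `M` such that for every `n ≥ M` there is a
Markov coupling kernel `K` on `X × X` whose marginals at `(x',x'')` are `Q^n(x',·)` and
`Q^n(x'',·)` and which gives mass `< δ` to `{(y,z) : d(y,z) > δ}`, then `ν Q^n` converges
weakly to `μ` for every probability measure `ν`; in particular `μ` is the unique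
`Q`-invariant probability measure. -/
theorem stmt10 {X : Type*} [MetricSpace X] [CompactSpace X]
    [MeasurableSpace X] [BorelSpace X]
    (Q : Kernel X X) [IsMarkovKernel Q]
    (μ : Measure X) [IsProbabilityMeasure μ]
    (hinv : μ.bind (fun x => Q x) = μ)
    (hcpl : ∀ δ : ℝ, 0 < δ → ∃ M : ℕ, ∀ n : ℕ, M ≤ n →
      ∃ K : Kernel (X × X) (X × X), IsMarkovKernel K ∧
        (∀ p : X × X, (K p).map Prod.fst = kpow Q n p.1) ∧
        (∀ p : X × X, (K p).map Prod.snd = kpow Q n p.2) ∧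
        (∀ p : X × X, K p {q : X × X | δ < dist q.1 q.2} < ENNReal.ofReal δ)) :
    (∀ ν : Measure X, IsProbabilityMeasure ν →
      ∀ g : X → ℝ, Continuous g →
        Tendsto (fun n : ℕ => ∫ x, g x ∂(ν.bind (fun x => kpow Q n x))) atTop
          (nhds (∫ x, g x ∂μ)))
    ∧ ∀ ν : Measure X, IsProbabilityMeasure ν → ν.bind (fun x => Q x) = ν → ν = μ := by
  obtain ⟨h_tendsto, h_unique⟩ := stmt10_general (μ := ⟨μ, inferInstance⟩) hinv
    (uniformlyCoalescing_of_exists_kernel hcpl)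
  simp only [kpow_eq_pow]
  exact ⟨fun ν hν g hg ↦ ProbabilityMeasure.tendsto_iff_forall_integral_tendsto.mp
      (h_tendsto ⟨ν, hν⟩) (.mkOfCompact ⟨g, hg⟩),
    fun ν hν h ↦ congrArg ProbabilityMeasure.toMeasure (h_unique ⟨ν, hν⟩ h)⟩
end

section
/- Let (Ω,P,T) be a measure-preserving dynamical system and let X', X'' : Ω → A^ℤ be measurable maps that are equivariant, i.e. X' ∘ T = σ ∘ X' and X'' ∘ T = σ ∘ X'' almost surely. Let k ∈ ℕ, and suppose that the random variables τ^k ∘ X' and τ^k ∘ X'' are independent and each has law μ. Then P( X'(ω)(0) = X''(ω)(0) ) = 1/|A|. (Consequently, in any dynamical real-time coupling of the factor filtration generated by (τ^n X_0)_{n∈ℕ} which is independent in the distant past, the two copies of the coordinate X_0(0) agree only with probability 1/|A|, so this factor filtration is not dynamically I-cosy and hence not dynamically standard.) -/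
open MeasureTheory

/-!
Put `D = X' - X''`. As `τ` is additive, `τ^k D = τ^k X' - τ^k X''`, and subtracting an independent
configuration from a uniform one leaves it uniform, so `τ^k D` has law `μ`. A window of `D` of
length `N` determines a window of `τ^k D` of length `N - k`; hence the law of
`(D 0, …, D (N - 1))` is at most `|A|^k` times the uniform law, with a constant independent of `N`.
If the common law `ρ` of the coordinates of the stationary process `D` differed from the uniform
law, the sums of some function `f` over windows of length `N` would have means differing by a
multiple of `N` under the two laws, whereas bounded density and a variance of order `N` only allow
a difference of order `√N`.
-/

open ProbabilityTheory
open scoped NNReal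

section MeasureTheory

variable {α Ω : Type*} [MeasurableSpace α] [MeasurableSpace Ω]

lemma measure_le_of_singleton_le [Countable α] [MeasurableSingletonClass α] {μ ν : Measure α}
    (h : ∀ a, μ {a} ≤ ν {a}) : μ ≤ ν := by
  refine Measure.le_iff.2 fun s hs ↦ ?_
  rw [← μ.tsum_indicator_apply_singleton s hs, ← ν.tsum_indicator_apply_singleton s hs]
  exact ENNReal.tsum_le_tsum fun a ↦ Set.indicator_le_indicator (h a)

instance isAddRightInvariant_infinitePi {ι : Type*} {G : ι → Type*} [∀ i, AddGroup (G i)]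
    [∀ i, MeasurableSpace (G i)] [∀ i, MeasurableAdd (G i)] (μ : ∀ i, Measure (G i))
    [∀ i, IsProbabilityMeasure (μ i)] [∀ i, (μ i).IsAddRightInvariant] :
    (Measure.infinitePi μ).IsAddRightInvariant where
  map_add_right_eq_self g := by
    refine (Measure.infinitePi_map_pi μ fun i ↦ measurable_add_const (g i)).trans ?_
    simp_rw [map_add_right_eq_self]

instance isAddRightInvariant_uniformOn_univ {G : Type*} [AddGroup G] [MeasurableSpace G]
    [MeasurableAdd G] : (uniformOn (Set.univ : Set G)).IsAddRightInvariant := by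
  rw [uniformOn, ProbabilityTheory.cond, Measure.restrict_univ]
  infer_instance

lemma map_sub_eq_of_indepFun {G : Type*} [AddGroup G] [MeasurableSpace G] [MeasurableAdd₂ G]
    [MeasurableNeg G] {P : Measure Ω} [IsProbabilityMeasure P] {U V : Ω → G}
    (hU : Measurable U) (hV : Measurable V) (hUV : U ⟂ᵢ[P] V)
    [(P.map U).IsAddRightInvariant] : P.map (fun ω ↦ U ω - V ω) = P.map U := by
  have := Measure.isProbabilityMeasure_map (μ := P) hU.aemeasurable
  have := Measure.isProbabilityMeasure_map (μ := P) hV.aemeasurable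
  have hpair : MeasurePreserving (fun ω ↦ (U ω, V ω)) P ((P.map U).prod (P.map V)) :=
    ⟨hU.prodMk hV,
      (indepFun_iff_map_prod_eq_prod_map_map hU.aemeasurable hV.aemeasurable).1 hUV⟩
  exact (measurePreserving_fst.comp ((measurePreserving_sub_prod _ _).comp hpair)).map_eq

lemma sq_integral_sub_integral_le_mul_variance {μ ν : Measure α} [IsFiniteMeasure μ]
    [IsProbabilityMeasure ν] {C : ℝ≥0} (hνμ : ν ≤ C • μ) {f : α → ℝ} (hf : MemLp f 2 μ) :
    (∫ x, f x ∂ν - ∫ x, f x ∂μ) ^ 2 ≤ C * Var[f; μ] := by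
  set c := ∫ x, f x ∂μ
  have hfν : MemLp f 2 ν := hf.of_measure_le_smul ENNReal.coe_ne_top hνμ
  have hgμ : MemLp (fun x ↦ f x - c) 2 (C • μ) :=
    (hf.sub (memLp_const c)).smul_measure ENNReal.coe_ne_top
  have hgν : MemLp (fun x ↦ f x - c) 2 ν := hfν.sub (memLp_const c)
  calc (∫ x, f x ∂ν - c) ^ 2
      = (∫ x, (f x - c) ∂ν) ^ 2 := by
        rw [integral_sub (hfν.integrable one_le_two) (integrable_const c), integral_const,
          probReal_univ, one_smul]
    _ ≤ ∫ x, (f x - c) ^ 2 ∂ν := by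
        simpa [variance_eq_sub hgν] using variance_nonneg (fun x ↦ f x - c) ν
    _ ≤ ∫ x, (f x - c) ^ 2 ∂(C • μ) :=
        integral_mono_measure hνμ (.of_forall fun x ↦ sq_nonneg _) hgμ.integrable_sq
    _ = C * Var[f; μ] := by
        rw [integral_smul_nnreal_measure, variance_eq_integral hf.aemeasurable, NNReal.smul_def,
          smul_eq_mul]

section Window

variable {ι : Type*} [Fintype ι] {ν : Measure (ι → α)} {π ρ : Measure α} {f : α → ℝ} {C : ℝ≥0}

lemma integral_sum_comp_eval (hν : ∀ i, MeasurePreserving (Function.eval i) ν ρ)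
    (hf : Integrable f ρ) : ∫ w, ∑ i, f (w i) ∂ν = Fintype.card ι * ∫ x, f x ∂ρ := by
  have hcoord (i : ι) : ∫ w, f (w i) ∂ν = ∫ x, f x ∂ρ := by
    rw [← (hν i).map_eq]
    refine (integral_map (hν i).aemeasurable ?_).symm
    exact (hν i).map_eq ▸ hf.aestronglyMeasurable
  have hint (i : ι) : Integrable (fun w ↦ f (w i)) ν := (hν i).integrable_comp_of_integrable hf
  rw [integral_finsetSum _ fun i _ ↦ hint i]
  simp only [hcoord, Finset.sum_const, Finset.card_univ, nsmul_eq_mul]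

lemma le_smul_of_le_smul_pi [Nonempty ι] [IsProbabilityMeasure π]
    (hν : ∀ i, MeasurePreserving (Function.eval i) ν ρ) (hC : ν ≤ C • Measure.pi fun _ ↦ π) :
    ρ ≤ C • π := by
  let i : ι := Classical.arbitrary ι
  calc ρ = ν.map (Function.eval i) := (hν i).map_eq.symm
    _ ≤ (C • Measure.pi fun _ ↦ π).map (Function.eval i) := Measure.map_mono hC (by fun_prop)
    _ = C • π := by rw [Measure.map_smul, (measurePreserving_eval _ i).map_eq]

-- Both the means and the variance of the sum of `f` over `ι` are of order `card ι`, so passing to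
-- this sum improves the variance bound by a factor `card ι`.
lemma sq_integral_sub_integral_le_div_card [Nonempty ι] [IsProbabilityMeasure ν]
    [IsProbabilityMeasure π] (hν : ∀ i, MeasurePreserving (Function.eval i) ν ρ)
    (hC : ν ≤ C • Measure.pi fun _ ↦ π) (hf : MemLp f 2 π) :
    (∫ x, f x ∂ρ - ∫ x, f x ∂π) ^ 2 ≤ C * Var[f; π] / Fintype.card ι := by
  have hπ (i : ι) := measurePreserving_eval (fun _ : ι ↦ π) i
  have hfρ : Integrable f ρ :=
    (hf.integrable one_le_two).of_measure_le_smul ENNReal.coe_ne_top (le_smul_of_le_smul_pi hν hC)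
  have hvar : Var[∑ i : ι, fun w ↦ f (w i); Measure.pi fun _ ↦ π] = Fintype.card ι * Var[f; π] := by
    rw [variance_sum_pi fun _ ↦ hf, Finset.sum_const, Finset.card_univ, nsmul_eq_mul]
  have hsum := sq_integral_sub_integral_le_mul_variance hC
    (memLp_finsetSum' Finset.univ fun i _ ↦ hf.comp_measurePreserving (hπ i))
  simp only [Finset.sum_apply, Function.comp_apply, Function.eval] at hsum
  have hcard : (0 : ℝ) < Fintype.card ι := by exact_mod_cast Fintype.card_pos
  rw [le_div_iff₀ hcard]
  refine le_of_mul_le_mul_right ?_ hcard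
  calc (∫ x, f x ∂ρ - ∫ x, f x ∂π) ^ 2 * Fintype.card ι * Fintype.card ι
      = (Fintype.card ι * ∫ x, f x ∂ρ - Fintype.card ι * ∫ x, f x ∂π) ^ 2 := by ring
    _ ≤ C * (Fintype.card ι * Var[f; π]) := by
        rw [← integral_sum_comp_eval hν hfρ,
          ← integral_sum_comp_eval hπ (hf.integrable one_le_two), ← hvar]
        exact hsum
    _ = C * Var[f; π] * Fintype.card ι := by ring

end Window

lemma eq_of_map_le_smul_pi {P : Measure Ω} [IsProbabilityMeasure P] {π ρ : Measure α}
    [IsProbabilityMeasure π] {Z : ℕ → Ω → α} {C : ℝ≥0} (hZ : ∀ i, MeasurePreserving (Z i) P ρ)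
    (hC : ∀ N : ℕ, P.map (fun ω (i : Fin N) ↦ Z i ω) ≤ C • Measure.pi fun _ ↦ π) : ρ = π := by
  have : IsProbabilityMeasure ρ := (hZ 0).map_eq ▸
    Measure.isProbabilityMeasure_map (hZ 0).aemeasurable
  have hW (N : ℕ) : Measurable fun ω (i : Fin N) ↦ Z i ω :=
    measurable_pi_lambda _ fun i ↦ (hZ i).measurable
  refine Measure.ext fun s hs ↦ ?_
  set f : α → ℝ := s.indicator 1
  have hf : MemLp f 2 π := (memLp_const 1).indicator hs
  have hbound (N : ℕ) (hN : 0 < N) :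
      (∫ x, f x ∂ρ - ∫ x, f x ∂π) ^ 2 ≤ C * Var[f; π] / N := by
    have : NeZero N := ⟨hN.ne'⟩
    have := Measure.isProbabilityMeasure_map (μ := P) (hW N).aemeasurable
    simpa using sq_integral_sub_integral_le_div_card (ν := P.map fun ω (i : Fin N) ↦ Z i ω)
      (fun i ↦ ⟨measurable_pi_apply i,
        (Measure.map_map (measurable_pi_apply i) (hW N)).trans (hZ i).map_eq⟩) (hC N) hf
  have hzero : (∫ x, f x ∂ρ - ∫ x, f x ∂π) ^ 2 ≤ 0 :=
    ge_of_tendsto (tendsto_const_div_atTop_nhds_zero_nat (C * Var[f; π]))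
      ((Filter.eventually_gt_atTop 0).mono hbound)
  have hint : ∫ x, f x ∂ρ = ∫ x, f x ∂π :=
    sub_eq_zero.1 (pow_eq_zero_iff two_ne_zero |>.1 (hzero.antisymm (sq_nonneg _)))
  rw [integral_indicator_one hs, integral_indicator_one hs] at hint
  exact (measureReal_eq_measureReal_iff).1 hint

end MeasureTheory

section Shift

/-- The left shift `σ` on bi-infinite sequences, for which `X'` and `X''` are equivariant. -/
def leftShift {α : Type*} (x : ℤ → α) : ℤ → α := fun i ↦ x (i + 1)

variable {α Ω : Type*} [MeasurableSpace α] [MeasurableSpace Ω]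

lemma measurable_leftShift : Measurable (leftShift : (ℤ → α) → ℤ → α) :=
  measurable_pi_lambda _ fun i ↦ measurable_pi_apply (i + 1)

lemma measurePreserving_leftShift_map {P : Measure Ω} {T : Ω → Ω} (hT : MeasurePreserving T P P)
    {X : Ω → ℤ → α} (hX : Measurable X) (hXT : ∀ᵐ ω ∂P, X (T ω) = leftShift (X ω)) :
    MeasurePreserving leftShift (P.map X) (P.map X) where
  measurable := measurable_leftShift
  map_eq := calc
    (P.map X).map leftShift = P.map (leftShift ∘ X) := Measure.map_map measurable_leftShift hX
    _ = P.map (X ∘ T) := Measure.map_congr (hXT.mono fun _ h ↦ h.symm)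
    _ = P.map X := by rw [← Measure.map_map hX hT.measurable, hT.map_eq]

lemma map_eval_eq_map_eval_zero {ν : Measure (ℤ → α)} (hν : MeasurePreserving leftShift ν ν)
    (i : ℤ) : ν.map (fun x ↦ x i) = ν.map fun x ↦ x 0 := by
  have hper : Function.Periodic (fun i : ℤ ↦ ν.map fun x ↦ x i) 1 := fun i ↦ calc
    ν.map (fun x ↦ x (i + 1)) = (ν.map leftShift).map fun x ↦ x i :=
      (Measure.map_map (measurable_pi_apply i) measurable_leftShift).symm
    _ = ν.map fun x ↦ x i := by rw [hν.map_eq]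
  simpa using hper.int_mul_eq i

end Shift

section Tau

variable {A : Type*}

lemma tau_iterate_sub [AddCommGroup A] (k : ℕ) (x y : ℤ → A) :
    tau^[k] (x - y) = tau^[k] x - tau^[k] y :=
  iterate_map_sub (AddMonoidHom.mk' tau fun x y : ℤ → A ↦ funext fun i ↦
    add_add_add_comm (x i) (y i) (x (i + 1)) (y (i + 1))) k x y

lemma tau_iterate_congr [Add A] {k : ℕ} {x y : ℤ → A} {i : ℤ}
    (h : ∀ j ∈ Set.Icc i (i + k), x j = y j) : tau^[k] x i = tau^[k] y i := by
  induction k generalizing x y with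
  | zero => exact h i (by simp)
  | succ k ih =>
    rw [Function.iterate_succ_apply, Function.iterate_succ_apply]
    refine ih fun j hj ↦ ?_
    obtain ⟨hij, hjk⟩ := hj
    exact congrArg₂ (· + ·) (h j ⟨hij, by grind⟩) (h (j + 1) ⟨by grind, by grind⟩)

lemma measurable_tau_iterate [Add A] [MeasurableSpace A] [MeasurableAdd₂ A] (k : ℕ) :
    Measurable (tau^[k] : (ℤ → A) → ℤ → A) :=
  .iterate (measurable_pi_lambda _ fun i ↦
    (measurable_pi_apply i).add (measurable_pi_apply (i + 1))) k

end Tau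

section Uniform

variable {A : Type*} [Fintype A] [MeasurableSpace A] [MeasurableSingletonClass A]

lemma uniformOn_univ_singleton (a : A) :
    uniformOn Set.univ {a} = (Fintype.card A : ENNReal)⁻¹ := by
  rw [uniformOn_univ, Measure.count_singleton, one_div]

/-- The product measure `μ = ⊗ U_A` on `A^ℤ`, with `U_A` encoded as `uniformOn Set.univ`. -/
noncomputable abbrev uniformProduct (A : Type*) [Finite A] [Nonempty A] [MeasurableSpace A]
    [MeasurableSingletonClass A] : Measure (ℤ → A) :=
  Measure.infinitePi fun _ ↦ uniformOn Set.univ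

lemma uniformProduct_cylinder [Nonempty A] (s : Finset ℤ) (y : ℤ → A) :
    uniformProduct A {x | ∀ i ∈ s, x i = y i} = (Fintype.card A : ENNReal)⁻¹ ^ s.card := by
  have hbox : {x : ℤ → A | ∀ i ∈ s, x i = y i} = (s : Set ℤ).pi fun i ↦ {y i} := by
    ext; simp
  rw [hbox, Measure.infinitePi_pi _ fun i _ ↦ measurableSet_singleton (y i)]
  simp only [uniformOn_univ_singleton, Finset.prod_const]

lemma eq_uniformProduct [Nonempty A] {μ : Measure (ℤ → A)}
    (hμ : ∀ (s : Finset ℤ) (y : ℤ → A),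
      μ {x | ∀ i ∈ s, x i = y i} = (Fintype.card A : ENNReal)⁻¹ ^ s.card) :
    μ = uniformProduct A := by
  have hproj : IsProjectiveLimit μ fun s : Finset ℤ ↦ (uniformProduct A).map s.restrict := by
    refine fun s ↦ Measure.ext_of_singleton fun z ↦ ?_
    obtain ⟨y, rfl⟩ : ∃ y : ℤ → A, s.restrict y = z :=
      Subtype.val_injective.surjective_comp_right z
    have hfiber : s.restrict ⁻¹' ({s.restrict y} : Set (s → A)) =
        {x : ℤ → A | ∀ i ∈ s, x i = y i} := by
      ext; simp [funext_iff]
    rw [Measure.map_apply (by fun_prop) (measurableSet_singleton _),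
      Measure.map_apply (by fun_prop) (measurableSet_singleton _), hfiber, hμ,
      uniformProduct_cylinder]
  exact hproj.unique fun _ ↦ rfl

end Uniform

section Stationary

variable {A : Type*} [Nonempty A] [Add A] [MeasurableSpace A] [MeasurableSingletonClass A]
  {ν : Measure (ℤ → A)} {k : ℕ}

lemma measure_window_le [Fintype A] (hν : MeasurePreserving tau^[k] ν (uniformProduct A))
    (N : ℕ) (y : ℤ → A) :
    ν {x | ∀ i : Fin N, x i = y i} ≤ (Fintype.card A : ENNReal)⁻¹ ^ (N - k) := by
  set S : Set (ℤ → A) := {x | ∀ i ∈ Finset.Ico (0 : ℤ) (N - k : ℕ), x i = tau^[k] y i}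
  have hS : MeasurableSet S := by measurability
  have hsub : {x | ∀ i : Fin N, x i = y i} ⊆ tau^[k] ⁻¹' S := by
    intro x hx i hi
    refine tau_iterate_congr fun j hj ↦ ?_
    obtain ⟨hi0, hiN⟩ := Finset.mem_Ico.1 hi
    obtain ⟨hij, hjk⟩ := hj
    lift j to ℕ using hi0.trans hij
    exact hx ⟨j, by omega⟩
  calc ν {x | ∀ i : Fin N, x i = y i}
      ≤ ν (tau^[k] ⁻¹' S) := measure_mono hsub
    _ = uniformProduct A S := hν.measure_preimage hS.nullMeasurableSet
    _ = (Fintype.card A : ENNReal)⁻¹ ^ (N - k) := by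
        rw [uniformProduct_cylinder, Int.card_Ico, sub_zero, Int.toNat_natCast]

lemma map_window_le_smul_pi [Fintype A] (hν : MeasurePreserving tau^[k] ν (uniformProduct A))
    (N : ℕ) :
    ν.map (fun x (i : Fin N) ↦ x i) ≤
      ((Fintype.card A : ℝ≥0) ^ k) • Measure.pi fun _ ↦ uniformOn Set.univ := by
  set c : ENNReal := (Fintype.card A : ENNReal)
  have hc_mul_inv : c * c⁻¹ = 1 := ENNReal.mul_inv_cancel (by simp [c]) (by simp [c])
  have hc_inv_le : c⁻¹ ≤ 1 := by simp [c, Nat.one_le_iff_ne_zero]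
  refine measure_le_of_singleton_le fun w ↦ ?_
  obtain ⟨y, rfl⟩ : ∃ y : ℤ → A, (fun i : Fin N ↦ y i) = w :=
    (Nat.cast_injective.comp Fin.val_injective).surjective_comp_right w
  have hfiber : (fun (x : ℤ → A) (i : Fin N) ↦ x i) ⁻¹' {fun i : Fin N ↦ y i} =
      {x | ∀ i : Fin N, x i = y i} := by
    ext; simp [funext_iff]
  calc ν.map (fun x (i : Fin N) ↦ x i) {fun i : Fin N ↦ y i}
      = ν {x | ∀ i : Fin N, x i = y i} := by
        rw [Measure.map_apply (by fun_prop) (measurableSet_singleton _), hfiber]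
    _ ≤ c⁻¹ ^ (N - k) := measure_window_le hν N y
    _ = c ^ k * c⁻¹ ^ (k + (N - k)) := by
        rw [pow_add, ← mul_assoc, ← mul_pow, hc_mul_inv, one_pow, one_mul]
    _ ≤ c ^ k * c⁻¹ ^ N := by
        gcongr 1
        exact pow_le_pow_right_of_le_one' hc_inv_le le_add_tsub
    _ = (((Fintype.card A : ℝ≥0) ^ k) • Measure.pi fun _ ↦ uniformOn Set.univ)
          {fun i : Fin N ↦ y i} := by
        rw [Measure.smul_apply, Measure.pi_singleton]
        simp [uniformOn_univ_singleton, ENNReal.smul_def, c]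

theorem map_eval_eq_uniformOn [Finite A] (hσ : MeasurePreserving leftShift ν ν)
    (hτ : MeasurePreserving tau^[k] ν (uniformProduct A)) (i : ℤ) :
    ν.map (fun x ↦ x i) = uniformOn Set.univ := by
  have := Fintype.ofFinite A
  have : IsProbabilityMeasure (ν.map tau^[k]) := hτ.map_eq ▸ inferInstance
  have : IsProbabilityMeasure ν := Measure.isProbabilityMeasure_of_map tau^[k]
  refine eq_of_map_le_smul_pi (P := ν) (Z := fun i x ↦ x i) (fun j ↦ ⟨by fun_prop, ?_⟩)
    (map_window_le_smul_pi hτ)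
  exact (map_eval_eq_map_eval_zero hσ j).trans (map_eval_eq_map_eval_zero hσ i).symm

end Stationary

theorem stmt12_general {A : Type*} [Fintype A] [AddCommGroup A] [MeasurableSpace A]
    [MeasurableSingletonClass A] {Ω : Type*} [MeasurableSpace Ω] {P : Measure Ω}
    [IsProbabilityMeasure P] {T : Ω → Ω} (hT : MeasurePreserving T P P)
    {X' X'' : Ω → ℤ → A} (hX' : Measurable X') (hX'' : Measurable X'')
    (hE' : ∀ᵐ ω ∂P, X' (T ω) = leftShift (X' ω))
    (hE'' : ∀ᵐ ω ∂P, X'' (T ω) = leftShift (X'' ω)) {k : ℕ}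
    (hind : (fun ω ↦ tau^[k] (X' ω)) ⟂ᵢ[P] fun ω ↦ tau^[k] (X'' ω))
    (hL' : P.map (fun ω ↦ tau^[k] (X' ω)) = uniformProduct A) (a : A) :
    P {ω | X' ω 0 - X'' ω 0 = a} = (Fintype.card A : ENNReal)⁻¹ := by
  have hD : Measurable (X' - X'') := hX'.sub hX''
  have hσ : MeasurePreserving leftShift (P.map (X' - X'')) (P.map (X' - X'')) := by
    refine measurePreserving_leftShift_map hT hD ?_
    filter_upwards [hE', hE''] with ω h' h''
    rw [Pi.sub_apply, h', h'']
    rfl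
  have hτ : MeasurePreserving tau^[k] (P.map (X' - X'')) (uniformProduct A) := by
    refine ⟨measurable_tau_iterate k, ?_⟩
    have : (P.map fun ω ↦ tau^[k] (X' ω)).IsAddRightInvariant :=
      hL' ▸ inferInstance
    have hτD : tau^[k] ∘ (X' - X'') = fun ω ↦ tau^[k] (X' ω) - tau^[k] (X'' ω) :=
      funext fun ω ↦ tau_iterate_sub k (X' ω) (X'' ω)
    rw [Measure.map_map (measurable_tau_iterate k) hD, hτD, ← hL']
    exact map_sub_eq_of_indepFun ((measurable_tau_iterate k).comp hX')
      ((measurable_tau_iterate k).comp hX'') hind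
  have h := map_eval_eq_uniformOn hσ hτ 0
  rw [Measure.map_map (measurable_pi_apply 0) hD] at h
  rw [← uniformOn_univ_singleton a, ← h,
    Measure.map_apply (by fun_prop) (measurableSet_singleton a)]
  rfl

/-- Let `(Ω, P, T)` be a measure-preserving dynamical system and `X', X'' : Ω → A^ℤ`
measurable maps which are equivariant (`X' ∘ T = σ ∘ X'` a.s., where `σ` is the left shift).
If for some `k` the random variables `τ^k ∘ X'` and `τ^k ∘ X''` are independent, each with
law the uniform product measure `μ` (characterized on cylinder sets), then
`P(X'(ω)(0) = X''(ω)(0)) = 1/|A|`. -/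
theorem stmt12 {A : Type*} [Fintype A] [AddCommGroup A] [MeasurableSpace A]
    [MeasurableSingletonClass A] (hA : 1 < Fintype.card A)
    (μ : Measure (ℤ → A)) [IsProbabilityMeasure μ]
    (hμ : ∀ (s : Finset ℤ) (y : ℤ → A),
      μ {ω | ∀ i ∈ s, ω i = y i} = (Fintype.card A : ENNReal)⁻¹ ^ s.card)
    {Ω : Type*} [MeasurableSpace Ω] (P : Measure Ω) [IsProbabilityMeasure P]
    (T : Ω → Ω) (hT : Measurable T) (hTP : Measure.map T P = P)
    (X' X'' : Ω → (ℤ → A)) (hX' : Measurable X') (hX'' : Measurable X'')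
    (hE' : ∀ᵐ ω ∂P, X' (T ω) = fun i => X' ω (i + 1))
    (hE'' : ∀ᵐ ω ∂P, X'' (T ω) = fun i => X'' ω (i + 1))
    (k : ℕ)
    (hind : ProbabilityTheory.IndepFun
      (fun ω => tau^[k] (X' ω)) (fun ω => tau^[k] (X'' ω)) P)
    (hL' : Measure.map (fun ω => tau^[k] (X' ω)) P = μ)
    (hL'' : Measure.map (fun ω => tau^[k] (X'' ω)) P = μ) :
    P {ω | X' ω 0 = X'' ω 0} = (Fintype.card A : ENNReal)⁻¹ := by
  simpa only [sub_eq_zero] using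
    stmt12_general ⟨hT, hTP⟩ hX' hX'' hE' hE'' hind (hL'.trans (eq_uniformProduct hμ)) 0
end

section
/- Fix n₀ ∈ ℤ and u : ℤ × ℤ → [0,1). Declare a site (n,i) ∈ ℤ × ℤ open if u(n,i) ∈ I_? (i.e. u(n,i) < 1−ε̃). Define the envelope process X^env(n,i) ∈ A ∪ {?} for n ≥ n₀ by X^env(n₀,i) = ? for all i, and X^env(n+1,i) = φ_ε^env(X^env(n,i), X^env(n,i+1), u(n+1,i)). Then for every n ≥ n₀+1 and every i ∈ ℤ: X^env(n,i) = ? if and only if there exists j ∈ ℤ and an open oriented path from (n₀+1, j) to (n,i). -/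
/-- Given a bijection `e : A ≃ Fin |A|` and `0 < ε̃ < 1`, `aof e εt v` is the letter `a ∈ A`
such that `v ∈ I_a = [1-ε̃ + e(a)·ε̃/|A|, 1-ε̃ + (e(a)+1)·ε̃/|A|)` (junk value otherwise). -/
noncomputable def aof {A : Type*} [Fintype A] [Nonempty A]
    (e : A ≃ Fin (Fintype.card A)) (εt : ℝ) (v : ℝ) : A :=
  e.symm ⟨(⌊(v - (1 - εt)) * (Fintype.card A : ℝ) / εt⌋).toNat % Fintype.card A,
    Nat.mod_lt _ Fintype.card_pos⟩

/-- The envelope updating function `φ_ε^env` on the alphabet `A ∪ {?}` (as `Option A`, with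
`? = none`): it returns `b + c` (resp. `?`) if `u ∈ I_? = [0, 1-ε̃)` and `b, c ∈ A`
(resp. `? ∈ {b,c}`), and the letter `a` if `u ∈ I_a`. -/
noncomputable def phiEnv {A : Type*} [Fintype A] [Nonempty A] [Add A]
    (e : A ≃ Fin (Fintype.card A)) (εt : ℝ) (b c : Option A) (u : ℝ) : Option A :=
  if u < 1 - εt then Option.map₂ (· + ·) b c else some (aof e εt u)

/-- The envelope process started at time `n₀` from the all-`?` configuration:
`envProc e εt u n₀ m i` is `X^env(n₀ + m, i)`, defined by
`X^env(n₀,·) = ?` and `X^env(n+1,i) = φ_ε^env(X^env(n,i), X^env(n,i+1), u(n+1,i))`. -/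
noncomputable def envProc {A : Type*} [Fintype A] [Nonempty A] [Add A]
    (e : A ≃ Fin (Fintype.card A)) (εt : ℝ) (u : ℤ → ℤ → ℝ) (n₀ : ℤ) :
    ℕ → ℤ → Option A
  | 0 => fun _ => none
  | m + 1 => fun i =>
      phiEnv e εt (envProc e εt u n₀ m i) (envProc e εt u n₀ m (i + 1))
        (u (n₀ + m + 1) i)

/-!
The letter written outside `I_?` never matters: a site carries `?` exactly when it is open and one
of its two parents carries `?`. Reachability by open oriented paths from a fixed level satisfies
the same recursion (drop or append the last site of the path). At level `n₀ + 1` all parents carry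
`?`, so there both properties say that the site is open.
-/

section OpenPath

variable {V : Type*} {R : V → V → Prop} {openAt : ℤ → V → Prop} {m n : ℤ}

/-- Open oriented paths `c` from level `m` to level `n`, in a space-time `ℤ × V` whose site `(ℓ, v)`
is open when `openAt ℓ v`, with steps from `v` to `w` allowed when `R v w`. Only the values of `c`
on `{m, …, n}` matter. -/
def IsOpenPath (R : V → V → Prop) (openAt : ℤ → V → Prop) (m n : ℤ) (c : ℤ → V) : Prop :=
  (∀ ℓ, m ≤ ℓ → ℓ < n → R (c ℓ) (c (ℓ + 1))) ∧ ∀ ℓ, m ≤ ℓ → ℓ ≤ n → openAt ℓ (c ℓ)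

/-- Percolation from level `m`: the site `(n, v)` is reached from some site of level `m` by an open
oriented path. For `n < m` the path is unconstrained, so this holds vacuously. -/
def IsReachableFromLevel (R : V → V → Prop) (openAt : ℤ → V → Prop) (m n : ℤ) (v : V) : Prop :=
  ∃ c : ℤ → V, c n = v ∧ IsOpenPath R openAt m n c

theorem IsOpenPath.congr {c c' : ℤ → V} (hc : IsOpenPath R openAt m n c)
    (h : Set.EqOn c c' (Set.Icc m n)) : IsOpenPath R openAt m n c' := by
  refine ⟨fun ℓ hm hn => ?_, fun ℓ hm hn => ?_⟩
  · rw [← h ⟨hm, hn.le⟩, ← h ⟨by lia, by lia⟩]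
    exact hc.1 ℓ hm hn
  · rw [← h ⟨hm, hn⟩]
    exact hc.2 ℓ hm hn

theorem isOpenPath_self_iff {c : ℤ → V} : IsOpenPath R openAt m m c ↔ openAt m (c m) := by
  refine ⟨fun hc => hc.2 m le_rfl le_rfl, fun h => ⟨fun ℓ hm hn => by lia, fun ℓ hm hn => ?_⟩⟩
  rwa [le_antisymm hn hm]

theorem isOpenPath_add_one_iff {c : ℤ → V} (hmn : m ≤ n) :
    IsOpenPath R openAt m (n + 1) c ↔
      IsOpenPath R openAt m n c ∧ R (c n) (c (n + 1)) ∧ openAt (n + 1) (c (n + 1)) := by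
  constructor
  · rintro ⟨hstep, hopen⟩
    exact ⟨⟨fun ℓ hm hn => hstep ℓ hm (by lia), fun ℓ hm hn => hopen ℓ hm (by lia)⟩,
      hstep n hmn (by lia), hopen (n + 1) (by lia) le_rfl⟩
  · rintro ⟨⟨hstep, hopen⟩, hlast, hend⟩
    refine ⟨fun ℓ hm hn => ?_, fun ℓ hm hn => ?_⟩
    · obtain hlt | rfl := (Int.lt_add_one_iff.mp hn).lt_or_eq
      exacts [hstep ℓ hm hlt, hlast]
    · obtain hlt | rfl := hn.lt_or_eq
      exacts [hopen ℓ hm (Int.lt_add_one_iff.mp hlt), hend]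

theorem isReachableFromLevel_self_iff {v : V} :
    IsReachableFromLevel R openAt m m v ↔ openAt m v := by
  simp only [IsReachableFromLevel, isOpenPath_self_iff]
  exact ⟨fun ⟨_, hc, h⟩ => hc ▸ h, fun h => ⟨fun _ => v, rfl, h⟩⟩

theorem isReachableFromLevel_add_one_iff {v : V} (hmn : m ≤ n) :
    IsReachableFromLevel R openAt m (n + 1) v ↔
      openAt (n + 1) v ∧ ∃ w, R w v ∧ IsReachableFromLevel R openAt m n w := by
  constructor
  · rintro ⟨c, rfl, hc⟩
    obtain ⟨hpath, hlast, hend⟩ := (isOpenPath_add_one_iff hmn).mp hc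
    exact ⟨hend, c n, hlast, c, rfl, hpath⟩
  · rintro ⟨hend, _, hlast, c, rfl, hc⟩
    have hagree : Set.EqOn c (Function.update c (n + 1) v) (Set.Iic n) := fun ℓ hℓ =>
      (Function.update_of_ne (Int.lt_add_one_iff.mpr hℓ).ne v c).symm
    refine ⟨Function.update c (n + 1) v, Function.update_self .., ?_⟩
    rw [isOpenPath_add_one_iff hmn, Function.update_self, ← hagree (Set.mem_Iic.mpr le_rfl)]
    exact ⟨hc.congr (hagree.mono Set.Icc_subset_Iic_self), hlast, hend⟩

end OpenPath

section Envelope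

variable {A : Type*} [Fintype A] [Nonempty A] [Add A] (e : A ≃ Fin (Fintype.card A)) (εt : ℝ)

theorem phiEnv_eq_none_iff {b c : Option A} {v : ℝ} :
    phiEnv e εt b c v = none ↔ v < 1 - εt ∧ (b = none ∨ c = none) := by
  unfold phiEnv
  split_ifs with hv <;> simp [hv]

variable (u : ℤ → ℤ → ℝ) {n₀ n : ℤ}

theorem envProc_add_one_eq_none_iff (hn : n₀ ≤ n) (i : ℤ) :
    envProc e εt u n₀ (n + 1 - n₀).toNat i = none ↔
      u (n + 1) i < 1 - εt ∧ (envProc e εt u n₀ (n - n₀).toNat i = none ∨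
        envProc e εt u n₀ (n - n₀).toNat (i + 1) = none) := by
  obtain ⟨k, rfl⟩ := Int.le.dest hn
  have hk : (n₀ + k - n₀).toNat = k := by lia
  have hk' : (n₀ + k + 1 - n₀).toNat = k + 1 := by lia
  rw [hk, hk', envProc, phiEnv_eq_none_iff]

theorem envProc_eq_none_iff_isReachableFromLevel (hn : n₀ + 1 ≤ n) (i : ℤ) :
    envProc e εt u n₀ (n - n₀).toNat i = none ↔
      IsReachableFromLevel (fun j k => k = j ∨ k = j - 1) (fun ℓ j => u ℓ j < 1 - εt)
        (n₀ + 1) n i := by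
  induction n, hn using Int.leInduction generalizing i with
  | base =>
    have hstart (j : ℤ) : envProc e εt u n₀ (n₀ - n₀).toNat j = none := by
      rw [sub_self, Int.toNat_zero, envProc]
    simp only [envProc_add_one_eq_none_iff e εt u le_rfl, hstart, isReachableFromLevel_self_iff,
      or_self, and_true]
  | succ n hn ih =>
    have hparent (j : ℤ) : (i = j ∨ i = j - 1) ↔ (j = i ∨ j = i + 1) := by lia
    simp only [envProc_add_one_eq_none_iff e εt u (by lia : n₀ ≤ n), ih,
      isReachableFromLevel_add_one_iff hn, hparent, or_and_right, exists_or, exists_eq_left]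

theorem stmt13_general (hn : n₀ + 1 ≤ n) (i : ℤ) :
    envProc e εt u n₀ (n - n₀).toNat i = none
      ↔ ∃ j : ℤ, ∃ c : ℤ → ℤ, c (n₀ + 1) = j ∧ c n = i ∧
          (∀ ℓ : ℤ, n₀ + 1 ≤ ℓ → ℓ ≤ n - 1 → (c (ℓ + 1) = c ℓ ∨ c (ℓ + 1) = c ℓ - 1)) ∧
          (∀ ℓ : ℤ, n₀ + 1 ≤ ℓ → ℓ ≤ n → u ℓ (c ℓ) < 1 - εt) := by
  simp only [Int.le_sub_one_iff]
  rw [envProc_eq_none_iff_isReachableFromLevel e εt u hn, exists_comm]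
  simp only [exists_eq_left', IsReachableFromLevel, IsOpenPath]

end Envelope

/-- Coupling of the envelope process with oriented site percolation (a site `(n,i)` being
open when `u(n,i) < 1 - ε̃`): for `n ≥ n₀ + 1`, one has `X^env(n,i) = ?` if and only if some
site `(n₀+1, j)` leads to `(n,i)` through an open oriented path. -/
theorem stmt13 {A : Type*} [Fintype A] [AddCommGroup A] (hA : 1 < Fintype.card A)
    (ε : ℝ) (hε0 : 0 < ε)
    (hε1 : ε < ((Fintype.card A : ℝ) - 1) / (Fintype.card A : ℝ))
    (εt : ℝ) (hεt : εt = ε * (Fintype.card A : ℝ) / ((Fintype.card A : ℝ) - 1))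
    (e : A ≃ Fin (Fintype.card A)) (u : ℤ → ℤ → ℝ)
    (hu : ∀ n i : ℤ, u n i ∈ Set.Ico (0 : ℝ) 1)
    (n₀ n : ℤ) (hn : n₀ + 1 ≤ n) (i : ℤ) :
    envProc e εt u n₀ (n - n₀).toNat i = none
      ↔ ∃ j : ℤ, ∃ c : ℤ → ℤ, c (n₀ + 1) = j ∧ c n = i ∧
          (∀ ℓ : ℤ, n₀ + 1 ≤ ℓ → ℓ ≤ n - 1 → (c (ℓ + 1) = c ℓ ∨ c (ℓ + 1) = c ℓ - 1)) ∧
          (∀ ℓ : ℤ, n₀ + 1 ≤ ℓ → ℓ ≤ n → u ℓ (c ℓ) < 1 - εt) :=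
  stmt13_general e εt u hn i
end

section
/- Fix n₀ ∈ ℤ, u : ℤ × ℤ → [0,1), and x ∈ A^ℤ. Define X^x(n,i) ∈ A for n ≥ n₀ by X^x(n₀,i) = x(i) and X^x(n+1,i) = φ_ε(X^x(n,i), X^x(n,i+1), u(n+1,i)), and define the envelope process X^env(n,i) ∈ A ∪ {?} by X^env(n₀,i) = ? and X^env(n+1,i) = φ_ε^env(X^env(n,i), X^env(n,i+1), u(n+1,i)). Then for every n ≥ n₀, every i ∈ ℤ and every a ∈ A: if X^env(n,i) = a (in particular X^env(n,i) ≠ ?), then X^x(n,i) = a, regardless of the initial configuration x. -/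
/-- The updating function `φ_ε : A × A × [0,1) → A`: it returns `b + c` when
`u ∈ I_? = [0, 1-ε̃)` and the letter `a` when `u ∈ I_a`. -/
noncomputable def phiEps {A : Type*} [Fintype A] [Nonempty A] [Add A]
    (e : A ≃ Fin (Fintype.card A)) (εt : ℝ) (b c : A) (u : ℝ) : A :=
  if u < 1 - εt then b + c else aof e εt u

/-- The PCA process started at time `n₀` from the configuration `x`:
`caProc e εt u n₀ x m i = X^x(n₀ + m, i)`, with
`X^x(n₀,·) = x` and `X^x(n+1,i) = φ_ε(X^x(n,i), X^x(n,i+1), u(n+1,i))`. -/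
noncomputable def caProc {A : Type*} [Fintype A] [Nonempty A] [Add A]
    (e : A ≃ Fin (Fintype.card A)) (εt : ℝ) (u : ℤ → ℤ → ℝ) (n₀ : ℤ) (x : ℤ → A) :
    ℕ → ℤ → A
  | 0 => x
  | m + 1 => fun i =>
      phiEps e εt (caProc e εt u n₀ x m i) (caProc e εt u n₀ x m (i + 1))
        (u (n₀ + m + 1) i)

/-- `Agrees o b` says that the symbol `o ∈ A ∪ {?}` is either `?` or the letter `b`: it is the
order relation `o ≤ b` of the flat order on `A ∪ {?}` with least element `?`. It is the
invariant relating the envelope process to the process started from a given configuration. -/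
def Agrees {α : Type*} (o : Option α) (b : α) : Prop :=
  ∀ a, o = some a → b = a

theorem agrees_none {α : Type*} (b : α) : Agrees none b :=
  fun _ h => nomatch h

theorem agrees_some {α : Type*} (b : α) : Agrees (some b) b :=
  fun _ h => Option.some.inj h

theorem Agrees.map₂ {α β γ : Type*} (f : α → β → γ) {o : Option α} {p : Option β} {b : α} {c : β}
    (ho : Agrees o b) (hp : Agrees p c) : Agrees (Option.map₂ f o p) (f b c) := by
  intro a h
  obtain ⟨b', c', hb, hc, rfl⟩ := Option.map₂_eq_some_iff.mp h
  rw [ho b' hb, hp c' hc]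

theorem Agrees.phiEnv_phiEps {A : Type*} [Fintype A] [Nonempty A] [Add A]
    (e : A ≃ Fin (Fintype.card A)) (εt : ℝ) {o p : Option A} {b c : A}
    (ho : Agrees o b) (hp : Agrees p c) (v : ℝ) :
    Agrees (phiEnv e εt o p v) (phiEps e εt b c v) := by
  unfold phiEnv phiEps
  split_ifs
  · exact ho.map₂ (· + ·) hp
  · exact agrees_some (aof e εt v)

theorem stmt14_general {A : Type*} [Fintype A] [Nonempty A] [Add A]
    (e : A ≃ Fin (Fintype.card A)) (εt : ℝ) (u : ℤ → ℤ → ℝ) (n₀ : ℤ) (x : ℤ → A)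
    (m : ℕ) (i : ℤ) :
    Agrees (envProc e εt u n₀ m i) (caProc e εt u n₀ x m i) := by
  induction m generalizing i with
  | zero => exact agrees_none (x i)
  | succ m ih => exact (ih i).phiEnv_phiEps e εt (ih (i + 1)) (u (n₀ + m + 1) i)

/-- Wherever the envelope process shows a symbol of `A` (not `?`), the PCA process started
from any initial configuration `x` shows that same symbol: for all `n ≥ n₀`, `i ∈ ℤ` and
`a ∈ A`, if `X^env(n,i) = a` then `X^x(n,i) = a`. -/
theorem stmt14 {A : Type*} [Fintype A] [AddCommGroup A] (hA : 1 < Fintype.card A)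
    (ε : ℝ) (hε0 : 0 < ε)
    (hε1 : ε < ((Fintype.card A : ℝ) - 1) / (Fintype.card A : ℝ))
    (εt : ℝ) (hεt : εt = ε * (Fintype.card A : ℝ) / ((Fintype.card A : ℝ) - 1))
    (e : A ≃ Fin (Fintype.card A)) (u : ℤ → ℤ → ℝ)
    (hu : ∀ n i : ℤ, u n i ∈ Set.Ico (0 : ℝ) 1)
    (n₀ : ℤ) (x : ℤ → A) :
    ∀ n : ℤ, n₀ ≤ n → ∀ i : ℤ, ∀ a : A,
      envProc e εt u n₀ (n - n₀).toNat i = some a →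
        caProc e εt u n₀ x (n - n₀).toNat i = a :=
  fun n _ i => stmt14_general e εt u n₀ x (n - n₀).toNat i
end

section
/- Fix u : ℤ × ℤ → [0,1). For each starting time n₀ ∈ ℤ, let X^{n₀,env}(n,i) ∈ A ∪ {?} (n ≥ n₀) be defined by X^{n₀,env}(n₀,i) = ? for all i and X^{n₀,env}(n+1,i) = φ_ε^env(X^{n₀,env}(n,i), X^{n₀,env}(n,i+1), u(n+1,i)). Then for all integers n₁ ≤ n₀ ≤ n, every i ∈ ℤ and every a ∈ A: if X^{n₀,env}(n,i) = a (i.e. X^{n₀,env}(n,i) ≠ ?), then X^{n₁,env}(n,i) = a. -/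
/-!
Order `A ∪ {?}` by definedness, with `?` at the bottom and distinct letters incomparable; this is
the order of `Part A` pulled back along `Part.ofOption`. For each `v` the rule `φ_ε^env(·, ·, v)` is
monotone for this order, being either constant or the strict extension of addition to `?`. At time
`n₀` the process started at `n₀` is everywhere `?`, hence below the process started earlier, and
since both are driven by the same `u`, monotonicity propagates this comparison to all later times.
-/

theorem ofOption_map₂_mono {α β γ : Type*} (f : α → β → γ) {b b' : Option α} {c c' : Option β}
    (hb : Part.ofOption b ≤ Part.ofOption b') (hc : Part.ofOption c ≤ Part.ofOption c') :
    Part.ofOption (Option.map₂ f b c) ≤ Part.ofOption (Option.map₂ f b' c') := by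
  intro a ha
  obtain ⟨x, y, hx, hy, hxy⟩ := Option.mem_map₂_iff.mp (Part.mem_ofOption.mp ha)
  have hx' : x ∈ b' := Part.mem_ofOption.mp (hb x (Part.mem_ofOption.mpr hx))
  have hy' : y ∈ c' := Part.mem_ofOption.mp (hc y (Part.mem_ofOption.mpr hy))
  exact Part.mem_ofOption.mpr (Option.mem_map₂_iff.mpr ⟨x, y, hx', hy', hxy⟩)

section Envelope

variable {A : Type*} [Fintype A] [Nonempty A] [Add A] (e : A ≃ Fin (Fintype.card A)) (εt : ℝ)

theorem ofOption_phiEnv_mono {b b' c c' : Option A} (v : ℝ)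
    (hb : Part.ofOption b ≤ Part.ofOption b') (hc : Part.ofOption c ≤ Part.ofOption c') :
    Part.ofOption (phiEnv e εt b c v) ≤ Part.ofOption (phiEnv e εt b' c' v) := by
  unfold phiEnv
  split_ifs
  · exact ofOption_map₂_mono (· + ·) hb hc
  · exact le_rfl

theorem ofOption_envProc_add_le (u : ℤ → ℤ → ℝ) (n₁ : ℤ) (k m : ℕ) (i : ℤ) :
    Part.ofOption (envProc e εt u (n₁ + k) m i) ≤ Part.ofOption (envProc e εt u n₁ (k + m) i) := by
  induction m generalizing i with
  | zero => exact bot_le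
  | succ m ih =>
    have same_time : n₁ + k + m + 1 = n₁ + (k + m : ℕ) + 1 := by push_cast; ring
    rw [← Nat.add_assoc, envProc, envProc, same_time]
    exact ofOption_phiEnv_mono e εt _ (ih i) (ih (i + 1))

theorem stmt15_general (u : ℤ → ℤ → ℝ) {n₁ n₀ n : ℤ} (h₁₀ : n₁ ≤ n₀) (h₀ : n₀ ≤ n) (i : ℤ) (a : A)
    (ha : envProc e εt u n₀ (n - n₀).toNat i = some a) :
    envProc e εt u n₁ (n - n₁).toNat i = some a := by
  obtain ⟨k, rfl⟩ := Int.le.dest h₁₀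
  obtain ⟨m, rfl⟩ := Int.le.dest h₀
  have elapsed_late : (n₁ + k + m - (n₁ + k)).toNat = m := by lia
  have elapsed_early : (n₁ + k + m - n₁).toNat = k + m := by lia
  rw [elapsed_late] at ha
  rw [elapsed_early]
  exact Part.mem_ofOption.mp
    (ofOption_envProc_add_le e εt u n₁ k m i a (Part.mem_ofOption.mpr ha))

end Envelope

/-- Monotonicity of the envelope processes in the starting time: for `n₁ ≤ n₀ ≤ n`, if the
envelope process started at `n₀` shows the symbol `a ∈ A` at site `(n,i)`, then so does the
envelope process started at `n₁`. -/
theorem stmt15 {A : Type*} [Fintype A] [AddCommGroup A] (hA : 1 < Fintype.card A)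
    (ε : ℝ) (hε0 : 0 < ε)
    (hε1 : ε < ((Fintype.card A : ℝ) - 1) / (Fintype.card A : ℝ))
    (εt : ℝ) (hεt : εt = ε * (Fintype.card A : ℝ) / ((Fintype.card A : ℝ) - 1))
    (e : A ≃ Fin (Fintype.card A)) (u : ℤ → ℤ → ℝ)
    (hu : ∀ n i : ℤ, u n i ∈ Set.Ico (0 : ℝ) 1)
    (n₁ n₀ n : ℤ) (h₁₀ : n₁ ≤ n₀) (h₀ : n₀ ≤ n) (i : ℤ) (a : A) :
    envProc e εt u n₀ (n - n₀).toNat i = some a →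
      envProc e εt u n₁ (n - n₁).toNat i = some a := by
  exact stmt15_general e εt u h₁₀ h₀ i a
end
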